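/- arXiv:1507.03734 — 6 statements merged into one kernel-verified Lean document; each statement's English description precedes it below -/
import Mathlib

section
/- For every γ > 0, the function φ_γ(λ) := g*_γ(Aᵀλ) is differentiable with ∇φ_γ(λ) = A·u*_γ(Aᵀλ), and for all λ, λ̂ ∈ ℝⁿ one has the two-sided bound (γ/2)·‖u*_γ(Aᵀλ) − u*_γ(Aᵀλ̂)‖² ≤ φ_γ(λ) − φ_γ(λ̂) − ⟨∇φ_γ(λ̂), λ − λ̂⟩ ≤ (‖A‖²/(2γ))·‖λ − λ̂‖². -/
/-!
The function `h = g + γ b(·, uc)` is `γ`-strongly convex, and `g*_γ` is its convex conjugate `c`.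
Strong convexity gives `h` minus a linear function quadratic growth at its minimizer. If
`⟪z, ·⟫ - h` is maximal at `u` and `⟪ẑ, ·⟫ - h` at `v`, the linearization error
`c z - c ẑ - ⟪v, z - ẑ⟫` is the amount by which `v` fails to be optimal for `z`, hence at least
`γ/2 ‖u - v‖²`. It is also `⟪z - ẑ, u - v⟫` minus the amount by which `u` fails to be optimal for
`ẑ`, hence at most `⟪z - ẑ, u - v⟫ - γ/2 ‖u - v‖² ≤ ‖z - ẑ‖² / (2γ)`. The error being
quadratically small, `∇c(ẑ) = v`; composing with `Aᵀ` gives the claim.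
-/

open scoped RealInnerProductSpace

noncomputable section

/-- Bregman distance generated by `ω` with gradient `ω'`. -/
noncomputable def breg {p : ℕ} (ω : EuclideanSpace ℝ (Fin p) → ℝ)
    (ω' : EuclideanSpace ℝ (Fin p) → EuclideanSpace ℝ (Fin p))
    (u uh : EuclideanSpace ℝ (Fin p)) : ℝ :=
  ω u - ω uh - ⟪ω' uh, u - uh⟫

section UniformConvexity

variable {E : Type*} [NormedAddCommGroup E] [NormedSpace ℝ E] {s : Set E} {φ : ℝ → ℝ} {f g : E → ℝ}

theorem uniformConvexOn_add_convexOn (hf : UniformConvexOn s φ f) (hg : ConvexOn ℝ s g) :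
    UniformConvexOn s φ (f + g) := by
  simpa only [add_zero] using hf.add hg.uniformConvexOn_zero

theorem uniformConvexOn_const_mul {c : ℝ} (hc : 0 ≤ c) (hf : UniformConvexOn s φ f) :
    UniformConvexOn s (fun r => c * φ r) (fun x => c * f x) := by
  refine ⟨hf.1, fun x hx y hy a b ha hb hab => ?_⟩
  have hscaled := mul_le_mul_of_nonneg_left (hf.2 hx hy ha hb hab) hc
  simp only [smul_eq_mul] at hscaled ⊢
  linear_combination hscaled

theorem modulus_le_sub_of_isMinOn {u v : E} (hf : UniformConvexOn s φ f) (hmin : IsMinOn f s v)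
    (hv : v ∈ s) (hu : u ∈ s) : φ ‖u - v‖ ≤ f u - f v := by
  -- Compare `v` with the points `t u + (1 - t) v` and let `t` tend to `0`.
  have near : ∀ t ∈ Set.Ioo (0 : ℝ) 1, (1 - t) * φ ‖u - v‖ ≤ f u - f v := by
    rintro t ⟨ht₀, ht₁⟩
    have ht : 0 ≤ 1 - t := by linarith
    have hvt : f v ≤ f (t • u + (1 - t) • v) :=
      hmin (hf.1 hu hv ht₀.le ht (add_sub_cancel t 1))
    have hconv := hf.2 hu hv ht₀.le ht (add_sub_cancel t 1)
    simp only [smul_eq_mul] at hconv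
    refine le_of_mul_le_mul_left ?_ ht₀
    linear_combination hvt + hconv
  have hlim : Filter.Tendsto (fun t : ℝ => (1 - t) * φ ‖u - v‖) (nhdsWithin 0 (Set.Ioi 0))
      (nhds (φ ‖u - v‖)) := by
    have hcont : Continuous fun t : ℝ => (1 - t) * φ ‖u - v‖ := by fun_prop
    simpa using (hcont.tendsto 0).mono_left nhdsWithin_le_nhds
  exact le_of_tendsto hlim (Filter.eventually_of_mem (Ioo_mem_nhdsGT zero_lt_one) near)

end UniformConvexity

section InnerProduct

variable {E : Type*} [NormedAddCommGroup E] [InnerProductSpace ℝ E]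

theorem uniformConvexOn_sub_inner {s : Set E} {φ : ℝ → ℝ} {f : E → ℝ}
    (hf : UniformConvexOn s φ f) (z : E) : UniformConvexOn s φ (fun x => f x - ⟪z, x⟫) := by
  simpa [Pi.sub_def, ← sub_eq_add_neg] using
    uniformConvexOn_add_convexOn hf ((innerₛₗ ℝ (-z)).convexOn hf.1)

theorem real_inner_le_sq_norm_div_add_sq_norm {m : ℝ} (hm : 0 < m) (x y : E) :
    ⟪x, y⟫ ≤ ‖x‖ ^ 2 / (2 * m) + m / 2 * ‖y‖ ^ 2 := by
  have hyoung : 2 * ‖y‖ * ‖x‖ ≤ m * ‖y‖ ^ 2 + m⁻¹ * ‖x‖ ^ 2 := two_mul_le_add_mul_sq hm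
  calc ⟪x, y⟫ ≤ ‖x‖ * ‖y‖ := real_inner_le_norm x y
    _ ≤ (m * ‖y‖ ^ 2 + m⁻¹ * ‖x‖ ^ 2) / 2 := by linarith
    _ = ‖x‖ ^ 2 / (2 * m) + m / 2 * ‖y‖ ^ 2 := by field_simp; ring

end InnerProduct

section Gradient

variable {E F : Type*} [NormedAddCommGroup E] [InnerProductSpace ℝ E] [CompleteSpace E]
  [NormedAddCommGroup F] [InnerProductSpace ℝ F] [CompleteSpace F]

theorem hasGradientAt_of_abs_sub_sub_inner_le {f : E → ℝ} {a x : E} {C : ℝ}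
    (h : ∀ y, |f y - f x - ⟪a, y - x⟫| ≤ C * ‖y - x‖ ^ 2) : HasGradientAt f a x := by
  rw [hasGradientAt_iff_isLittleO]
  have hO : (fun y => f y - f x - ⟪a, y - x⟫) =O[nhds x] fun y => ‖y - x‖ ^ 2 :=
    Asymptotics.IsBigO.of_bound C (Filter.Eventually.of_forall fun y => by simpa using h y)
  exact hO.trans_isLittleO (Asymptotics.isLittleO_pow_sub_sub x one_lt_two)

theorem hasGradientAt_comp_adjoint {f : E → ℝ} {a : E} (A : E →L[ℝ] F) {y : F}
    (hf : HasGradientAt f a (A.adjoint y)) :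
    HasGradientAt (fun x => f (A.adjoint x)) (A a) y := by
  have hdual : InnerProductSpace.toDual ℝ F (A a) =
      (InnerProductSpace.toDual ℝ E a).comp A.adjoint := by
    ext x
    simp [ContinuousLinearMap.adjoint_inner_right]
  rw [hasGradientAt_iff_hasFDerivAt, hdual]
  exact hf.hasFDerivAt.comp y A.adjoint.hasFDerivAt

end Gradient

/-- The convex conjugate of `h`, restricted to `s`, has at `z` the value `c`, attained at `u`:
`c = max_{w ∈ s} (⟪z, w⟫ - h w) = ⟪z, u⟫ - h u`. The set `s` plays the role of the effective
domain of an extended-valued convex function. -/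
structure HasConjugateAt {E : Type*} [NormedAddCommGroup E] [InnerProductSpace ℝ E]
    (h : E → ℝ) (s : Set E) (c : ℝ) (u z : E) : Prop where
  mem : u ∈ s
  isMaxOn : IsMaxOn (fun w => ⟪z, w⟫ - h w) s u
  value_eq : c = ⟪z, u⟫ - h u

namespace HasConjugateAt

variable {E : Type*} [NormedAddCommGroup E] [InnerProductSpace ℝ E] {h : E → ℝ} {s : Set E}
  {φ : ℝ → ℝ} {c d m : ℝ} {u v w z z' : E}

theorem inner_sub_add_modulus_le (hu : HasConjugateAt h s c u z) (hh : UniformConvexOn s φ h)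
    (hw : w ∈ s) : ⟪z, w⟫ - h w + φ ‖w - u‖ ≤ c := by
  have hmin : IsMinOn (fun x => h x - ⟪z, x⟫) s u := by simpa using hu.isMaxOn.neg
  have hgrowth := modulus_le_sub_of_isMinOn (uniformConvexOn_sub_inner hh z) hmin hu.mem hw
  linear_combination hgrowth - hu.value_eq

theorem modulus_le_sub_sub_inner (hu : HasConjugateAt h s c u z) (hv : HasConjugateAt h s d v z')
    (hh : UniformConvexOn s φ h) : φ ‖u - v‖ ≤ c - d - ⟪v, z - z'⟫ := by
  have hgrowth := hu.inner_sub_add_modulus_le hh hv.mem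
  rw [norm_sub_rev] at hgrowth
  rw [real_inner_comm, inner_sub_left]
  linear_combination hgrowth + hv.value_eq

theorem sub_sub_inner_le (hu : HasConjugateAt h s c u z) (hv : HasConjugateAt h s d v z')
    (hm : 0 < m) (hh : StrongConvexOn s m h) : c - d - ⟪v, z - z'⟫ ≤ ‖z - z'‖ ^ 2 / (2 * m) := by
  have hgrowth := hv.inner_sub_add_modulus_le hh hu.mem
  have hbound : c - d - ⟪v, z - z'⟫ ≤ ⟪z - z', u - v⟫ - m / 2 * ‖u - v‖ ^ 2 := by
    rw [real_inner_comm, inner_sub_left, inner_sub_left, inner_sub_right, inner_sub_right]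
    linear_combination hgrowth + hu.value_eq
  linarith [real_inner_le_sq_norm_div_add_sq_norm hm (z - z') (u - v)]

theorem hasGradientAt [CompleteSpace E] {conj : E → ℝ} {argmax : E → E}
    (hconj : ∀ z, HasConjugateAt h s (conj z) (argmax z) z) (hm : 0 < m)
    (hh : StrongConvexOn s m h) (z : E) : HasGradientAt conj (argmax z) z := by
  refine hasGradientAt_of_abs_sub_sub_inner_le (C := 1 / (2 * m)) fun y => ?_
  have hnonneg : 0 ≤ conj y - conj z - ⟪argmax z, y - z⟫ :=
    le_trans (by positivity) ((hconj y).modulus_le_sub_sub_inner (hconj z) hh)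
  rw [abs_of_nonneg hnonneg, one_div_mul_eq_div]
  exact (hconj y).sub_sub_inner_le (hconj z) hm hh

end HasConjugateAt

theorem stmt_3_general {E F : Type*} [NormedAddCommGroup E] [InnerProductSpace ℝ E]
    [CompleteSpace E] [NormedAddCommGroup F] [InnerProductSpace ℝ F] [CompleteSpace F]
    {h : E → ℝ} {s : Set E} {m : ℝ} (hm : 0 < m) (hh : StrongConvexOn s m h) (A : E →L[ℝ] F)
    {conj : E → ℝ} {argmax : E → E} (hconj : ∀ z, HasConjugateAt h s (conj z) (argmax z) z) :
    (∀ y, HasGradientAt (fun x => conj (A.adjoint x)) (A (argmax (A.adjoint y))) y) ∧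
    ∀ x y, m / 2 * ‖argmax (A.adjoint x) - argmax (A.adjoint y)‖ ^ 2
          ≤ conj (A.adjoint x) - conj (A.adjoint y) - ⟪A (argmax (A.adjoint y)), x - y⟫ ∧
        conj (A.adjoint x) - conj (A.adjoint y) - ⟪A (argmax (A.adjoint y)), x - y⟫
          ≤ ‖A‖ ^ 2 / (2 * m) * ‖x - y‖ ^ 2 := by
  refine ⟨fun y => hasGradientAt_comp_adjoint A (HasConjugateAt.hasGradientAt hconj hm hh _),
    fun x y => ?_⟩
  have hx := hconj (A.adjoint x)
  have hy := hconj (A.adjoint y)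
  rw [← A.adjoint_inner_right, map_sub]
  refine ⟨hx.modulus_le_sub_sub_inner hy hh, (hx.sub_sub_inner_le hy hm hh).trans ?_⟩
  have hnorm : ‖A.adjoint x - A.adjoint y‖ ≤ ‖A‖ * ‖x - y‖ := by
    simpa only [map_sub, LinearIsometryEquiv.norm_map] using A.adjoint.le_opNorm (x - y)
  calc ‖A.adjoint x - A.adjoint y‖ ^ 2 / (2 * m) ≤ (‖A‖ * ‖x - y‖) ^ 2 / (2 * m) := by gcongr
    _ = ‖A‖ ^ 2 / (2 * m) * ‖x - y‖ ^ 2 := by ring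

section Bregman

variable {p : ℕ} {s : Set (EuclideanSpace ℝ (Fin p))} {g ω : EuclideanSpace ℝ (Fin p) → ℝ}

theorem uniformConvexOn_breg {φ : ℝ → ℝ} (hω : UniformConvexOn s φ ω)
    (ω' : EuclideanSpace ℝ (Fin p) → EuclideanSpace ℝ (Fin p)) (uc : EuclideanSpace ℝ (Fin p)) :
    UniformConvexOn s φ (fun u => breg ω ω' u uc) := by
  have hshift := uniformConvexOn_add_convexOn (uniformConvexOn_sub_inner hω (ω' uc))
    (convexOn_const (⟪ω' uc, uc⟫ - ω uc) hω.1)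
  have hbreg : (fun u => breg ω ω' u uc) =
      (fun u => ω u - ⟪ω' uc, u⟫) + fun _ => ⟪ω' uc, uc⟫ - ω uc := by
    ext u
    simp only [breg, inner_sub_right, Pi.add_apply]
    ring
  rwa [hbreg]

theorem strongConvexOn_add_mul_breg {m γ : ℝ} (hg : ConvexOn ℝ s g) (hω : StrongConvexOn s m ω)
    (hγ : 0 ≤ γ) (ω' : EuclideanSpace ℝ (Fin p) → EuclideanSpace ℝ (Fin p))
    (uc : EuclideanSpace ℝ (Fin p)) :
    StrongConvexOn s (γ * m) (fun u => g u + γ * breg ω ω' u uc) := by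
  have hsum := uniformConvexOn_add_convexOn
    (uniformConvexOn_const_mul hγ (uniformConvexOn_breg hω ω' uc)) hg
  simpa only [StrongConvexOn, Pi.add_def, add_comm, mul_div_assoc, mul_assoc] using hsum

end Bregman

theorem stmt_3 {p₁ n : ℕ}
    (g : EuclideanSpace ℝ (Fin p₁) → ℝ) (domg : Set (EuclideanSpace ℝ (Fin p₁)))
    (hgconv : ConvexOn ℝ domg g) (hglsc : LowerSemicontinuousOn g domg)
    (hgne : domg.Nonempty)
    (A : EuclideanSpace ℝ (Fin p₁) →L[ℝ] EuclideanSpace ℝ (Fin n))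
    (ω : EuclideanSpace ℝ (Fin p₁) → ℝ) (ω' : EuclideanSpace ℝ (Fin p₁) → EuclideanSpace ℝ (Fin p₁))
    (hωgrad : ∀ x, HasGradientAt ω (ω' x) x)
    (hωsc : StrongConvexOn domg 1 ω)
    (Lb : ℝ) (hLb : 0 < Lb) (hωlip : LipschitzWith (Real.toNNReal Lb) ω')
    (uc : EuclideanSpace ℝ (Fin p₁)) (huc : uc ∈ domg)
    (gS : ℝ → EuclideanSpace ℝ (Fin p₁) → ℝ) (uS : ℝ → EuclideanSpace ℝ (Fin p₁) → EuclideanSpace ℝ (Fin p₁))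
    (hgS : ∀ γ : ℝ, 0 < γ → ∀ z : EuclideanSpace ℝ (Fin p₁),
      uS γ z ∈ domg ∧
      (∀ u ∈ domg, ⟪z, u⟫ - g u - γ * breg ω ω' u uc
        ≤ ⟪z, uS γ z⟫ - g (uS γ z) - γ * breg ω ω' (uS γ z) uc) ∧
      (∀ u ∈ domg, ⟪z, u⟫ - g u - γ * breg ω ω' u uc
        = ⟪z, uS γ z⟫ - g (uS γ z) - γ * breg ω ω' (uS γ z) uc → u = uS γ z) ∧
      gS γ z = ⟪z, uS γ z⟫ - g (uS γ z) - γ * breg ω ω' (uS γ z) uc)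
 :
    ∀ γ : ℝ, 0 < γ →
      (∀ lam : EuclideanSpace ℝ (Fin n), HasGradientAt (fun mu => gS γ ((ContinuousLinearMap.adjoint A) mu))
          (A (uS γ ((ContinuousLinearMap.adjoint A) lam))) lam) ∧
      (∀ lam lamhat : EuclideanSpace ℝ (Fin n),
        γ/2 * ‖uS γ ((ContinuousLinearMap.adjoint A) lam) - uS γ ((ContinuousLinearMap.adjoint A) lamhat)‖^2
          ≤ gS γ ((ContinuousLinearMap.adjoint A) lam) - gS γ ((ContinuousLinearMap.adjoint A) lamhat)
            - ⟪A (uS γ ((ContinuousLinearMap.adjoint A) lamhat)), lam - lamhat⟫ ∧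
        gS γ ((ContinuousLinearMap.adjoint A) lam) - gS γ ((ContinuousLinearMap.adjoint A) lamhat)
            - ⟪A (uS γ ((ContinuousLinearMap.adjoint A) lamhat)), lam - lamhat⟫
          ≤ ‖A‖^2/(2*γ) * ‖lam - lamhat‖^2) := by
  intro γ hγ
  have hsc := strongConvexOn_add_mul_breg hgconv hωsc hγ.le ω' uc
  rw [mul_one] at hsc
  refine stmt_3_general hγ hsc A fun z => ?_
  obtain ⟨hmem, hmax, -, hval⟩ := hgS γ hγ z
  exact ⟨hmem, isMaxOn_iff.mpr (by simpa only [sub_sub] using hmax), by rw [hval, sub_sub]⟩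
end
end

section
/- Let k ≥ 0 and suppose (ūᵏ, v̄ᵏ, λ̄ᵏ) ∈ dom g × dom h × ℝⁿ and the next iterate is generated as follows: λ*_k := (1/β_k)(c − Aūᵏ − Bv̄ᵏ); λ̂ᵏ := (1−τ_k)λ̄ᵏ + τ_k λ*_k; ûᵏ⁺¹ minimizes u ↦ g(u) − ⟨Aᵀλ̂ᵏ, u⟩ + γ_{k+1} b(u, ū_c); v̂ᵏ⁺¹ minimizes v ↦ h(v) − ⟨Bᵀλ̂ᵏ, v⟩ + (η_k/2)‖Aûᵏ⁺¹ + Bv − c‖²; λ̄ᵏ⁺¹ := λ̂ᵏ − η_k(Aûᵏ⁺¹ + Bv̂ᵏ⁺¹ − c); and (ūᵏ⁺¹, v̄ᵏ⁺¹) := (1−τ_k)(ūᵏ, v̄ᵏ) + τ_k(ûᵏ⁺¹, v̂ᵏ⁺¹). If τ_k ∈ (0,1] and γ_k, γ_{k+1}, β_k, β_{k+1}, η_k > 0 satisfy (1 + L_b⁻¹τ_k)γ_{k+1} ≥ γ_k, β_{k+1} ≥ (1−τ_k)β_k, (1−τ_k²)γ_{k+1}β_k ≥ 2‖A‖²τ_k²,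 and 2‖A‖²η_k = γ_{k+1}, then G_{γ_{k+1},β_{k+1}}(w̄ᵏ⁺¹) ≤ (1−τ_k)·G_{γ_k,β_k}(w̄ᵏ) + (η_kτ_k²/4)·D_f², where w̄ᵏ = (ūᵏ, v̄ᵏ, λ̄ᵏ). -/
open scoped RealInnerProductSpace

noncomputable section

/-!
A minimizer `x` of `φ - ⟪l, A ·⟫` determines the conjugate of `φ` exactly at the multiplier `l`,
and strong convexity of `φ` keeps that conjugate within `η / 4 * ‖r‖ ^ 2` of its affine model after
the dual step `l ↦ l - η • r`. The quadratic penalty in the second subproblem makes the conjugate of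
`h` exact at the updated multiplier. Together these bound the new smoothed dual by data at the step
point.

The old smoothed dual is bounded below by Fenchel–Young at that same point, where replacing the
regularizer `b` by `b'` costs `(1 - τ) * b - b' ≤ 0`. For multiples `γ`, `γ'` of one Bregman
distance with an `L`-Lipschitz gradient, strong monotonicity of the gradient forces `1 ≤ L` unless
the domain is a single point, so `(1 - τ) * γ ≤ (1 - τ) * (1 + τ / L) * γ' ≤ γ'`.

The terms linear in the residual `r` cancel against the cross term of the averaged squared residual.
What remains is a multiple of `η * ‖r‖ ^ 2` satisfying `(1 + τ) / 2 + 1 / 4 - 1 ≤ τ ^ 2 / 4`, which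
is `0 ≤ (1 - τ) ^ 2`.
-/

section StrongConvexity

open AffineMap Filter Set Topology
open scoped NNReal

variable {E : Type*} [NormedAddCommGroup E] [NormedSpace ℝ E]
  {s : Set E} {f φ : E → ℝ} {m : ℝ} {x y : E}

lemma add_sq_norm_sub_le_of_isMinOn_add {φ' : E →L[ℝ] ℝ} (hf : StrongConvexOn s m f)
    (hφ : HasFDerivWithinAt φ φ' s x) (hmin : IsMinOn (fun u => f u + φ u) s x)
    (hx : x ∈ s) (hy : y ∈ s) :
    f x + m / 2 * ‖y - x‖ ^ 2 ≤ f y + φ' (y - x) := by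
  have hline : HasDerivWithinAt (φ ∘ lineMap x y) (φ' (y - x)) (Icc (0 : ℝ) 1) 0 :=
    HasFDerivWithinAt.comp_hasDerivWithinAt 0 (by rwa [lineMap_apply_zero])
      hasDerivWithinAt_lineMap (hf.1.mapsTo_lineMap hx hy)
  have hslope : Tendsto (slope (φ ∘ lineMap x y) 0) (𝓝[>] (0 : ℝ)) (𝓝 (φ' (y - x))) :=
    (hasDerivWithinAt_iff_tendsto_slope' (lt_irrefl 0)).1
      (hline.mono_of_mem_nhdsWithin (Icc_mem_nhdsGT zero_lt_one))
  have hchord : Tendsto (fun t : ℝ => f x - f y + (1 - t) * (m / 2 * ‖y - x‖ ^ 2)) (𝓝[>] 0)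
      (𝓝 (f x - f y + (1 - 0) * (m / 2 * ‖y - x‖ ^ 2))) :=
    (Continuous.tendsto (by fun_prop) 0).mono_left nhdsWithin_le_nhds
  have hle : ∀ᶠ t : ℝ in 𝓝[>] 0, f x - f y + (1 - t) * (m / 2 * ‖y - x‖ ^ 2)
      ≤ slope (φ ∘ lineMap x y) 0 t := by
    filter_upwards [Ioo_mem_nhdsGT (zero_lt_one (α := ℝ))] with t ⟨ht0, ht1⟩
    have hmint := isMinOn_iff.1 hmin _ (hf.1.lineMap_mem hx hy ⟨ht0.le, ht1.le⟩)
    have hconv := hf.2 hx hy (sub_nonneg.2 ht1.le) ht0.le (sub_add_cancel 1 t)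
    rw [← lineMap_apply_module, norm_sub_rev x y] at hconv
    simp only [smul_eq_mul] at hconv
    rw [slope_def_field, sub_zero, le_div_iff₀ ht0]
    simp only [Function.comp_apply, lineMap_apply_zero]
    linarith
  linarith [le_of_tendsto_of_tendsto hchord hslope hle]

lemma add_fderivWithin_add_sq_norm_sub_le {f' : E →L[ℝ] ℝ} (hf : StrongConvexOn s m f)
    (hf' : HasFDerivWithinAt f f' s x) (hx : x ∈ s) (hy : y ∈ s) :
    f x + f' (y - x) + m / 2 * ‖y - x‖ ^ 2 ≤ f y := by
  -- Every point minimizes `f + (-f)`, so the variational inequality applies with `φ = -f`.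
  have hmin : IsMinOn (fun u => f u + (-f) u) s x := isMinOn_iff.2 fun u _ => by simp
  have hvar := add_sq_norm_sub_le_of_isMinOn_add hf hf'.neg hmin hx hy
  rw [neg_apply] at hvar
  linarith

lemma mul_norm_sub_le_norm_fderivWithin_sub {f'x f'y : E →L[ℝ] ℝ} (hf : StrongConvexOn s m f)
    (hfx : HasFDerivWithinAt f f'x s x) (hfy : HasFDerivWithinAt f f'y s y)
    (hx : x ∈ s) (hy : y ∈ s) :
    m * ‖y - x‖ ≤ ‖f'y - f'x‖ := by
  rcases eq_or_ne y x with rfl | hne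
  · simp
  have hpos : 0 < ‖y - x‖ := norm_sub_pos_iff.2 hne
  refine le_of_mul_le_mul_right ?_ hpos
  have hxy := add_fderivWithin_add_sq_norm_sub_le hf hfx hx hy
  have hyx := add_fderivWithin_add_sq_norm_sub_le hf hfy hy hx
  rw [norm_sub_rev x y, ← neg_sub y x, map_neg] at hyx
  calc m * ‖y - x‖ * ‖y - x‖ ≤ (f'y - f'x) (y - x) := by
        rw [sub_apply]
        linarith
    _ ≤ ‖f'y - f'x‖ * ‖y - x‖ := (le_abs_self _).trans ((f'y - f'x).le_opNorm _)

lemma strongConvexOn_modulus_le_of_lipschitzOnWith {V : Type*} [NormedAddCommGroup V]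
    [InnerProductSpace ℝ V] [CompleteSpace V] {s : Set V} {f : V → ℝ} {f' : V → V} {K : ℝ≥0}
    {x y : V} (hf : StrongConvexOn s m f) (hgrad : ∀ z ∈ s, HasGradientWithinAt f (f' z) s z)
    (hlip : LipschitzOnWith K f' s) (hx : x ∈ s) (hy : y ∈ s) (hne : y ≠ x) : m ≤ K := by
  have hmono := mul_norm_sub_le_norm_fderivWithin_sub hf
    (hgrad x hx).hasFDerivWithinAt (hgrad y hy).hasFDerivWithinAt hx hy
  rw [← map_sub, LinearIsometryEquiv.norm_map] at hmono
  exact le_of_mul_le_mul_right (hmono.trans (hlip.norm_sub_le hy hx)) (norm_sub_pos_iff.2 hne)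

lemma strongConvexOn_const_mul {a : ℝ} (ha : 0 ≤ a) (hf : StrongConvexOn s m f) :
    StrongConvexOn s (a * m) (fun u => a * f u) := by
  refine ⟨hf.1, fun x hx y hy p q hp hq hpq => ?_⟩
  have hconv := mul_le_mul_of_nonneg_left (hf.2 hx hy hp hq hpq) ha
  simp only [smul_eq_mul] at hconv ⊢
  linarith

end StrongConvexity

section Bregman

open scoped NNReal

variable {p : ℕ} {ω : EuclideanSpace ℝ (Fin p) → ℝ}
  {ω' : EuclideanSpace ℝ (Fin p) → EuclideanSpace ℝ (Fin p)}
  {s : Set (EuclideanSpace ℝ (Fin p))} {x u : EuclideanSpace ℝ (Fin p)}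

lemma breg_self : breg ω ω' x x = 0 := by
  simp [breg]

lemma strongConvexOn_breg {m : ℝ} (hω : StrongConvexOn s m ω) :
    StrongConvexOn s m (fun u => breg ω ω' u x) := by
  refine ⟨hω.1, fun u hu v hv p q hp hq hpq => ?_⟩
  obtain rfl : p = 1 - q := eq_sub_of_add_eq hpq
  have hconv := hω.2 hu hv hp hq hpq
  simp only [breg, smul_eq_mul, inner_sub_right, inner_add_right, inner_smul_right] at hconv ⊢
  linarith

lemma breg_nonneg (hω : ConvexOn ℝ s ω) (hgrad : HasGradientWithinAt ω (ω' x) s x)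
    (hx : x ∈ s) (hu : u ∈ s) : 0 ≤ breg ω ω' u x := by
  have hfirst := add_fderivWithin_add_sq_norm_sub_le (strongConvexOn_zero.2 hω)
    hgrad.hasFDerivWithinAt hx hu
  rw [InnerProductSpace.toDual_apply_apply] at hfirst
  rw [breg]
  linarith

lemma one_sub_mul_breg_le {K : ℝ≥0} {τ γ γ' : ℝ} (hω : StrongConvexOn s 1 ω)
    (hgrad : ∀ y ∈ s, HasGradientWithinAt ω (ω' y) s y) (hlip : LipschitzOnWith K ω' s)
    (hτ : τ ∈ Set.Icc (0 : ℝ) 1) (hγ' : 0 ≤ γ') (hγ : γ ≤ (1 + (K : ℝ)⁻¹ * τ) * γ')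
    (hx : x ∈ s) (hu : u ∈ s) :
    (1 - τ) * (γ * breg ω ω' u x) ≤ γ' * breg ω ω' u x := by
  rcases eq_or_ne u x with rfl | hne
  · simp [breg_self]
  have hK : (K : ℝ)⁻¹ ≤ 1 :=
    inv_le_one_of_one_le₀ (strongConvexOn_modulus_le_of_lipschitzOnWith hω hgrad hlip hx hu hne)
  have hconv : ConvexOn ℝ s ω := strongConvexOn_zero.1 (hω.mono zero_le_one)
  have hfactor : (1 - τ) * (1 + (K : ℝ)⁻¹ * τ) ≤ 1 := by
    calc (1 - τ) * (1 + (K : ℝ)⁻¹ * τ) ≤ (1 - τ) * (1 + 1 * τ) := by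
          gcongr
          exacts [sub_nonneg.2 hτ.2, hτ.1]
      _ ≤ 1 := by nlinarith [sq_nonneg τ]
  rw [← mul_assoc]
  refine mul_le_mul_of_nonneg_right ?_ (breg_nonneg hconv (hgrad x hx) hx hu)
  calc (1 - τ) * γ ≤ (1 - τ) * ((1 + (K : ℝ)⁻¹ * τ) * γ') :=
        mul_le_mul_of_nonneg_left hγ (sub_nonneg.2 hτ.2)
    _ = (1 - τ) * (1 + (K : ℝ)⁻¹ * τ) * γ' := by ring
    _ ≤ γ' := mul_le_of_le_one_left hγ' hfactor

end Bregman

section Conjugate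

variable {E : Type*} [NormedAddCommGroup E] [NormedSpace ℝ E]
  {s : Set E} {f : E → ℝ} {ℓ : E →L[ℝ] ℝ} {x : E}

/-- The Fenchel conjugate of `f`, extended by `+∞` outside `s`, at the functional `ℓ`. It is
real-valued, hence meaningful only where `ℓ - f` is bounded above on `s`. -/
def conjOn (f : E → ℝ) (s : Set E) (ℓ : E →L[ℝ] ℝ) : ℝ :=
  sSup ((fun u => ℓ u - f u) '' s)

lemma sub_le_conjOn (hbdd : BddAbove ((fun u => ℓ u - f u) '' s)) (hx : x ∈ s) :
    ℓ x - f x ≤ conjOn f s ℓ :=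
  le_csSup hbdd (Set.mem_image_of_mem _ hx)

lemma conjOn_le {a : ℝ} (hs : s.Nonempty) (h : ∀ u ∈ s, ℓ u - f u ≤ a) : conjOn f s ℓ ≤ a :=
  csSup_le (hs.image _) (Set.forall_mem_image.2 h)

variable {H : Type*} [NormedAddCommGroup H] [InnerProductSpace ℝ H] {A : E →L[ℝ] H} {l : H}

lemma neg_mul_inner_le_sq_norm_add {η : ℝ} (hη : 0 ≤ η) (r a : H) :
    -(η * ⟪r, a⟫) ≤ η * ‖a‖ ^ 2 + η / 4 * ‖r‖ ^ 2 := by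
  have hsq : 0 ≤ η * ‖a + (1 / 2 : ℝ) • r‖ ^ 2 := by positivity
  rw [norm_add_sq_real, inner_smul_right, norm_smul, mul_pow, Real.norm_eq_abs, sq_abs,
    real_inner_comm] at hsq
  linarith

lemma conjOn_sub_smul_le_of_isMinOn {m η : ℝ} (hf : StrongConvexOn s m f) (hη : 0 ≤ η)
    (hAη : 2 * ‖A‖ ^ 2 * η ≤ m) (hx : x ∈ s) (hmin : IsMinOn (fun u => f u - ⟪l, A u⟫) s x)
    (r : H) :
    conjOn f s (innerSL ℝ (l - η • r) ∘L A) ≤ ⟪l - η • r, A x⟫ - f x + η / 4 * ‖r‖ ^ 2 := by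
  refine conjOn_le ⟨x, hx⟩ fun u hu => ?_
  have hgrowth : f x + m / 2 * ‖u - x‖ ^ 2 ≤ f u - ⟪l, A (u - x)⟫ :=
    add_sq_norm_sub_le_of_isMinOn_add hf (innerSL ℝ l ∘L A).hasFDerivWithinAt.neg hmin hx hu
  have hop : η * ‖A (u - x)‖ ^ 2 ≤ m / 2 * ‖u - x‖ ^ 2 := by
    calc η * ‖A (u - x)‖ ^ 2 ≤ η * (‖A‖ * ‖u - x‖) ^ 2 := by gcongr; exact A.le_opNorm _
      _ = 2 * ‖A‖ ^ 2 * η / 2 * ‖u - x‖ ^ 2 := by ring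
      _ ≤ m / 2 * ‖u - x‖ ^ 2 := by gcongr
  have hyoung := neg_mul_inner_le_sq_norm_add hη r (A (u - x))
  rw [map_sub] at hgrowth hop hyoung
  rw [ContinuousLinearMap.comp_apply, innerSL_apply_apply]
  simp only [inner_sub_left, inner_sub_right, real_inner_smul_left] at hgrowth hyoung ⊢
  linarith

lemma conjOn_sub_smul_le_of_isMinOn_add_sq {η : ℝ} {q : H} (hf : ConvexOn ℝ s f) (hx : x ∈ s)
    (hmin : IsMinOn (fun u => f u - ⟪l, A u⟫ + η / 2 * ‖q + A u‖ ^ 2) s x) :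
    conjOn f s (innerSL ℝ (l - η • (q + A x)) ∘L A) ≤ ⟪l - η • (q + A x), A x⟫ - f x := by
  refine conjOn_le ⟨x, hx⟩ fun u hu => ?_
  have hderiv : HasFDerivWithinAt (fun w => -⟪l, A w⟫ + η / 2 * ‖q + A w‖ ^ 2)
      (-(innerSL ℝ (l - η • (q + A x)) ∘L A)) s x := by
    refine ((innerSL ℝ l ∘L A).hasFDerivWithinAt.neg.add
      ((A.hasFDerivWithinAt.const_add q).norm_sq.const_mul (η / 2))).congr_fderiv ?_
    ext w
    simp only [add_apply, neg_apply, smul_apply, ContinuousLinearMap.comp_apply,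
      coe_innerSL_apply, inner_sub_left, inner_add_left, real_inner_smul_left, nsmul_eq_mul,
      Nat.cast_ofNat, smul_eq_mul]
    ring
  have hvar : f x + 0 / 2 * ‖u - x‖ ^ 2 ≤ f u + -⟪l - η • (q + A x), A (u - x)⟫ :=
    add_sq_norm_sub_le_of_isMinOn_add (strongConvexOn_zero.2 hf) hderiv
      (by simpa only [sub_eq_add_neg, add_assoc] using hmin) hx hu
  rw [map_sub, inner_sub_right] at hvar
  rw [ContinuousLinearMap.comp_apply, innerSL_apply_apply]
  linarith

end Conjugate

section Parameters

variable {β β' η τ : ℝ}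

lemma sq_le_of_two_mul_sq_mul_sq_le {a γ : ℝ} (hγ : 0 < γ) (haη : 2 * a ^ 2 * η = γ)
    (h : 2 * a ^ 2 * τ ^ 2 ≤ (1 - τ ^ 2) * γ * β) : τ ^ 2 ≤ (1 - τ ^ 2) * η * β := by
  have ha : 0 < 2 * a ^ 2 := by
    have ha0 : a ≠ 0 := by
      rintro rfl
      simp [← haη] at hγ
    positivity
  refine le_of_mul_le_mul_left ?_ ha
  calc 2 * a ^ 2 * τ ^ 2 ≤ (1 - τ ^ 2) * γ * β := h
    _ = 2 * a ^ 2 * ((1 - τ ^ 2) * η * β) := by rw [← haη]; ring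

lemma lt_one_of_sq_le (hβ : 0 < β) (hη : 0 ≤ η) (hτ : 0 ≤ τ) (hτη : τ ^ 2 ≤ (1 - τ ^ 2) * η * β) :
    τ < 1 := by
  by_contra! h
  have hnonpos : (1 - τ ^ 2) * (η * β) ≤ 0 :=
    mul_nonpos_of_nonpos_of_nonneg (by nlinarith) (by positivity)
  nlinarith

lemma sq_norm_convexComb_le {H : Type*} [NormedAddCommGroup H] [InnerProductSpace ℝ H]
    {x y : H} (hβ : 0 < β) (hτ : τ < 1) (hβ' : (1 - τ) * β ≤ β')
    (hτη : τ ^ 2 ≤ (1 - τ ^ 2) * η * β) :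
    1 / (2 * β') * ‖(1 - τ) • x + τ • y‖ ^ 2
      ≤ (1 - τ) * (1 / (2 * β) * ‖x‖ ^ 2) + τ * ⟪β⁻¹ • x, y⟫ + (1 + τ) * η / 2 * ‖y‖ ^ 2 := by
  have hτ' : 0 < 1 - τ := sub_pos.2 hτ
  have hcoeff : τ ^ 2 / (2 * ((1 - τ) * β)) ≤ (1 + τ) * η / 2 := by
    rw [div_le_iff₀ (by positivity)]
    linarith
  calc 1 / (2 * β') * ‖(1 - τ) • x + τ • y‖ ^ 2
      ≤ 1 / (2 * ((1 - τ) * β)) * ‖(1 - τ) • x + τ • y‖ ^ 2 := by gcongr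
    _ = (1 - τ) * (1 / (2 * β) * ‖x‖ ^ 2) + τ * ⟪β⁻¹ • x, y⟫
          + τ ^ 2 / (2 * ((1 - τ) * β)) * ‖y‖ ^ 2 := by
        rw [norm_add_sq_real, norm_smul, norm_smul, mul_pow, mul_pow, Real.norm_eq_abs,
          Real.norm_eq_abs, sq_abs, sq_abs, real_inner_smul_left, real_inner_smul_left,
          real_inner_smul_right]
        field_simp
    _ ≤ _ := by gcongr

end Parameters

/-- The data of the problem of minimizing `g u + h v` over `u ∈ domg`, `v ∈ domh` subject to
`A u + B v = c`. A convex function with values in `ℝ ∪ {+∞}` is encoded by its effective domain and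
a real-valued function whose values off that domain are irrelevant. -/
structure SeparableProblem (E F H : Type*) [NormedAddCommGroup E] [NormedSpace ℝ E]
    [NormedAddCommGroup F] [NormedSpace ℝ F] [NormedAddCommGroup H] [InnerProductSpace ℝ H] where
  g : E → ℝ
  domg : Set E
  h : F → ℝ
  domh : Set F
  A : E →L[ℝ] H
  B : F →L[ℝ] H
  c : H

namespace SeparableProblem

variable {E F H : Type*} [NormedAddCommGroup E] [NormedSpace ℝ E]
  [NormedAddCommGroup F] [NormedSpace ℝ F] [NormedAddCommGroup H] [InnerProductSpace ℝ H]
  (P : SeparableProblem E F H)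

/-- The residual of the linear constraint. -/
def residual (u : E) (v : F) : H := P.A u + P.B v - P.c

/-- The quadratic-penalty objective `f_β`. -/
def penalizedObjective (β : ℝ) (u : E) (v : F) : ℝ :=
  P.g u + P.h v + 1 / (2 * β) * ‖P.residual u v‖ ^ 2

/-- The dual objective (to be minimized) of the problem with `g` regularized to `g + b`; the `d_γ`
of the paper is the case where `b` is `γ` times a Bregman distance. -/
def smoothedDual (b : E → ℝ) (l : H) : ℝ :=
  conjOn (P.g + b) P.domg (innerSL ℝ l ∘L P.A) + conjOn P.h P.domh (innerSL ℝ l ∘L P.B) - ⟪P.c, l⟫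

/-- The smoothed primal-dual gap `G`, with regularizer `b` and penalty parameter `β`. -/
def smoothedGap (b : E → ℝ) (β : ℝ) (u : E) (v : F) (l : H) : ℝ :=
  P.penalizedObjective β u v + P.smoothedDual b l

variable {P} {b : E → ℝ} {β β' η τ : ℝ} {u u' : E} {v v' : F} {l : H}

lemma inner_residual (l : H) (u : E) (v : F) :
    ⟪l, P.residual u v⟫ = ⟪l, P.A u⟫ + ⟪l, P.B v⟫ - ⟪P.c, l⟫ := by
  rw [residual, inner_sub_right, inner_add_right, real_inner_comm l P.c]

lemma residual_convexComb (τ : ℝ) (u u' : E) (v v' : F) :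
    P.residual ((1 - τ) • u + τ • u') ((1 - τ) • v + τ • v')
      = (1 - τ) • P.residual u v + τ • P.residual u' v' := by
  simp only [residual, map_add, map_smul]
  module

lemma le_smoothedDual
    (hbddg : BddAbove ((fun u => ⟪l, P.A u⟫ - (P.g u + b u)) '' P.domg))
    (hbddh : BddAbove ((fun v => ⟪l, P.B v⟫ - P.h v) '' P.domh))
    (hu : u ∈ P.domg) (hv : v ∈ P.domh) :
    ⟪l, P.residual u v⟫ - (P.g u + b u) - P.h v ≤ P.smoothedDual b l := by
  have hg : ⟪l, P.A u⟫ - (P.g u + b u) ≤ conjOn (P.g + b) P.domg (innerSL ℝ l ∘L P.A) :=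
    sub_le_conjOn (f := P.g + b) (ℓ := innerSL ℝ l ∘L P.A) hbddg hu
  have hh : ⟪l, P.B v⟫ - P.h v ≤ conjOn P.h P.domh (innerSL ℝ l ∘L P.B) :=
    sub_le_conjOn (ℓ := innerSL ℝ l ∘L P.B) hbddh hv
  rw [smoothedDual, inner_residual]
  linarith

lemma smoothedDual_le_of_isMinOn {m : ℝ} (hgb : StrongConvexOn P.domg m (P.g + b))
    (hh : ConvexOn ℝ P.domh P.h) (hη : 0 ≤ η) (hAη : 2 * ‖P.A‖ ^ 2 * η ≤ m)
    (hu : u ∈ P.domg) (humin : IsMinOn (fun w => P.g w - ⟪l, P.A w⟫ + b w) P.domg u)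
    (hv : v ∈ P.domh)
    (hvmin : IsMinOn (fun w => P.h w - ⟪l, P.B w⟫ + η / 2 * ‖P.residual u w‖ ^ 2) P.domh v) :
    P.smoothedDual b (l - η • P.residual u v)
      ≤ ⟪l - η • P.residual u v, P.residual u v⟫ - (P.g u + b u) - P.h v
        + η / 4 * ‖P.residual u v‖ ^ 2 := by
  have hshift (w : F) : P.residual u w = P.A u - P.c + P.B w := add_sub_right_comm ..
  have hconjg := conjOn_sub_smul_le_of_isMinOn hgb hη hAη hu
    (by simpa only [Pi.add_apply, add_sub_right_comm] using humin) (P.residual u v)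
  have hconjh := conjOn_sub_smul_le_of_isMinOn_add_sq hh hv (by simpa only [hshift] using hvmin)
  rw [← hshift] at hconjh
  rw [Pi.add_apply] at hconjg
  rw [smoothedDual, inner_residual]
  linarith

lemma smoothedDual_eq_of_isLUB {a d : ℝ} (hdomg : P.domg.Nonempty) (hdomh : P.domh.Nonempty)
    (hg : IsLUB ((fun u => ⟪l, P.A u⟫ - (P.g u + b u)) '' P.domg) a)
    (hh : IsLUB ((fun v => ⟪l, P.B v⟫ - P.h v) '' P.domh) d) :
    P.smoothedDual b l = a + d - ⟪P.c, l⟫ := by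
  rw [← hg.csSup_eq (hdomg.image _), ← hh.csSup_eq (hdomh.image _)]
  rfl

lemma penalizedObjective_convexComb_le (hg : ConvexOn ℝ P.domg P.g) (hh : ConvexOn ℝ P.domh P.h)
    (hβ : 0 < β) (hτ0 : 0 ≤ τ) (hτ1 : τ < 1) (hβ' : (1 - τ) * β ≤ β')
    (hτη : τ ^ 2 ≤ (1 - τ ^ 2) * η * β)
    (hu : u ∈ P.domg) (hu' : u' ∈ P.domg) (hv : v ∈ P.domh) (hv' : v' ∈ P.domh) :
    P.penalizedObjective β' ((1 - τ) • u + τ • u') ((1 - τ) • v + τ • v')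
      ≤ (1 - τ) * P.penalizedObjective β u v + τ * (P.g u' + P.h v')
        + τ * ⟪β⁻¹ • P.residual u v, P.residual u' v'⟫
        + (1 + τ) * η / 2 * ‖P.residual u' v'‖ ^ 2 := by
  have hgconv := hg.2 hu hu' (sub_nonneg.2 hτ1.le) hτ0 (sub_add_cancel 1 τ)
  have hhconv := hh.2 hv hv' (sub_nonneg.2 hτ1.le) hτ0 (sub_add_cancel 1 τ)
  have hsq := sq_norm_convexComb_le (x := P.residual u v) (y := P.residual u' v') hβ hτ1 hβ' hτη
  simp only [penalizedObjective, residual_convexComb, smul_eq_mul] at hgconv hhconv ⊢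
  linarith

end SeparableProblem

theorem stmt_6_general {E F H : Type*} [NormedAddCommGroup E] [NormedSpace ℝ E]
    [NormedAddCommGroup F] [NormedSpace ℝ F] [NormedAddCommGroup H] [InnerProductSpace ℝ H]
    (P : SeparableProblem E F H) (hg : ConvexOn ℝ P.domg P.g) (hh : ConvexOn ℝ P.domh P.h)
    {b b' : E → ℝ} {τ γ' β β' η D : ℝ} (hb' : StrongConvexOn P.domg γ' b')
    (hbb' : ∀ u ∈ P.domg, (1 - τ) * b u ≤ b' u)
    (hD : ∀ u ∈ P.domg, ∀ v ∈ P.domh, ‖P.residual u v‖ ≤ D)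
    (hτ : 0 ≤ τ) (hβ : 0 < β) (hη : 0 ≤ η) (hβ' : (1 - τ) * β ≤ β')
    (hτη : τ ^ 2 ≤ (1 - τ ^ 2) * η * β) (hAη : 2 * ‖P.A‖ ^ 2 * η ≤ γ')
    {ubar uhat : E} {vbar vhat : F} {lambar lamhat : H}
    (hubar : ubar ∈ P.domg) (hvbar : vbar ∈ P.domh)
    (hbddg : BddAbove ((fun u => ⟪lambar, P.A u⟫ - (P.g u + b u)) '' P.domg))
    (hbddh : BddAbove ((fun v => ⟪lambar, P.B v⟫ - P.h v) '' P.domh))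
    (hlamhat : lamhat = (1 - τ) • lambar + τ • -(β⁻¹ • P.residual ubar vbar))
    (huhat : uhat ∈ P.domg)
    (humin : IsMinOn (fun u => P.g u - ⟪lamhat, P.A u⟫ + b' u) P.domg uhat)
    (hvhat : vhat ∈ P.domh)
    (hvmin : IsMinOn (fun v => P.h v - ⟪lamhat, P.B v⟫ + η / 2 * ‖P.residual uhat v‖ ^ 2)
      P.domh vhat) :
    P.smoothedGap b' β' ((1 - τ) • ubar + τ • uhat) ((1 - τ) • vbar + τ • vhat)
        (lamhat - η • P.residual uhat vhat)
      ≤ (1 - τ) * P.smoothedGap b β ubar vbar lambar + η * τ ^ 2 / 4 * D ^ 2 := by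
  have hτ1 : τ < 1 := lt_one_of_sq_le hβ hη hτ hτη
  have hgb' : StrongConvexOn P.domg γ' (P.g + b') := by
    simpa only [StrongConvexOn, zero_add] using (uniformConvexOn_zero.2 hg).add hb'
  have hprimal := SeparableProblem.penalizedObjective_convexComb_le hg hh hβ hτ hτ1 hβ' hτη
    hubar huhat hvbar hvhat
  have hnew := SeparableProblem.smoothedDual_le_of_isMinOn hgb' hh hη hAη huhat humin hvhat hvmin
  have hold := mul_le_mul_of_nonneg_left
    (SeparableProblem.le_smoothedDual hbddg hbddh huhat hvhat) (sub_nonneg.2 hτ1.le)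
  set r := P.residual uhat vhat
  have hlin : ⟪lamhat - η • r, r⟫ = (1 - τ) * ⟪lambar, r⟫
      - τ * ⟪β⁻¹ • P.residual ubar vbar, r⟫ - η * ‖r‖ ^ 2 := by
    rw [hlamhat, inner_sub_left, inner_add_left, real_inner_smul_left, real_inner_smul_left,
      real_inner_smul_left, inner_neg_left, real_inner_self_eq_norm_sq]
    ring
  have hresidual : ((1 + τ) * η / 2 - 3 * η / 4) * ‖r‖ ^ 2 ≤ η * τ ^ 2 / 4 * D ^ 2 := by
    calc ((1 + τ) * η / 2 - 3 * η / 4) * ‖r‖ ^ 2 ≤ η * τ ^ 2 / 4 * ‖r‖ ^ 2 := by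
          gcongr
          nlinarith [mul_nonneg hη (sq_nonneg (1 - τ))]
      _ ≤ η * τ ^ 2 / 4 * D ^ 2 := by gcongr; exact hD _ huhat _ hvhat
  have hreg := hbb' uhat huhat
  unfold SeparableProblem.smoothedGap
  linarith

theorem stmt_6 {p₁ p₂ n : ℕ}
    (g : EuclideanSpace ℝ (Fin p₁) → ℝ) (domg : Set (EuclideanSpace ℝ (Fin p₁)))
    (h : EuclideanSpace ℝ (Fin p₂) → ℝ) (domh : Set (EuclideanSpace ℝ (Fin p₂)))
    (A : EuclideanSpace ℝ (Fin p₁) →L[ℝ] EuclideanSpace ℝ (Fin n))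
    (B : EuclideanSpace ℝ (Fin p₂) →L[ℝ] EuclideanSpace ℝ (Fin n))
    (c : EuclideanSpace ℝ (Fin n))
    (hgconv : ConvexOn ℝ domg g) (hglsc : LowerSemicontinuousOn g domg)
    (hgne : domg.Nonempty)
    (hhconv : ConvexOn ℝ domh h) (hhlsc : LowerSemicontinuousOn h domh)
    (hhne : domh.Nonempty)
    (hstar : EuclideanSpace ℝ (Fin p₂) → ℝ)
    (hhstar : ∀ z, IsLUB ((fun v => ⟪z, v⟫ - h v) '' domh) (hstar z))
    (ω : EuclideanSpace ℝ (Fin p₁) → ℝ) (ω' : EuclideanSpace ℝ (Fin p₁) → EuclideanSpace ℝ (Fin p₁))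
    (hωgrad : ∀ x, HasGradientAt ω (ω' x) x)
    (hωsc : StrongConvexOn domg 1 ω)
    (Lb : ℝ) (hLb : 0 < Lb) (hωlip : LipschitzWith (Real.toNNReal Lb) ω')
    (uc : EuclideanSpace ℝ (Fin p₁)) (huc : uc ∈ domg)
    (gS : ℝ → EuclideanSpace ℝ (Fin p₁) → ℝ) (uS : ℝ → EuclideanSpace ℝ (Fin p₁) → EuclideanSpace ℝ (Fin p₁))
    (hgS : ∀ γ : ℝ, 0 < γ → ∀ z : EuclideanSpace ℝ (Fin p₁),
      uS γ z ∈ domg ∧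
      (∀ u ∈ domg, ⟪z, u⟫ - g u - γ * breg ω ω' u uc
        ≤ ⟪z, uS γ z⟫ - g (uS γ z) - γ * breg ω ω' (uS γ z) uc) ∧
      (∀ u ∈ domg, ⟪z, u⟫ - g u - γ * breg ω ω' u uc
        = ⟪z, uS γ z⟫ - g (uS γ z) - γ * breg ω ω' (uS γ z) uc → u = uS γ z) ∧
      gS γ z = ⟪z, uS γ z⟫ - g (uS γ z) - γ * breg ω ω' (uS γ z) uc)
    (dG : ℝ → EuclideanSpace ℝ (Fin n) → ℝ)
    (hdG : ∀ γ lam, dG γ lam = gS γ ((ContinuousLinearMap.adjoint A) lam) + hstar ((ContinuousLinearMap.adjoint B) lam) - ⟪c, lam⟫)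
    (G : ℝ → ℝ → EuclideanSpace ℝ (Fin p₁) → EuclideanSpace ℝ (Fin p₂) → EuclideanSpace ℝ (Fin n) → ℝ)
    (hGdef : ∀ γ β u v lam, G γ β u v lam
      = g u + h v + 1/(2*β) * ‖A u + B v - c‖^2 + dG γ lam)
    (Df : ℝ)
    (hDf : IsLUB {r : ℝ | ∃ u ∈ domg, ∃ v ∈ domh, r = ‖A u + B v - c‖} Df)
    (ubar : EuclideanSpace ℝ (Fin p₁)) (vbar : EuclideanSpace ℝ (Fin p₂)) (lambar : EuclideanSpace ℝ (Fin n))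
    (hubar : ubar ∈ domg) (hvbar : vbar ∈ domh)
    (τ γ γp β βp η : ℝ)
    (hτ : τ ∈ Set.Ioc (0:ℝ) 1)
    (hγ : 0 < γ) (hγp : 0 < γp) (hβ : 0 < β) (hβp : 0 < βp) (hηpos : 0 < η)
    (hc1 : (1 + Lb⁻¹ * τ) * γp ≥ γ)
    (hc2 : βp ≥ (1 - τ) * β)
    (hc3 : (1 - τ^2) * γp * β ≥ 2 * ‖A‖^2 * τ^2)
    (hc4 : 2 * ‖A‖^2 * η = γp)
    (lamstark lamhat : EuclideanSpace ℝ (Fin n)) (uhat : EuclideanSpace ℝ (Fin p₁)) (vhat : EuclideanSpace ℝ (Fin p₂))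
    (ubarp : EuclideanSpace ℝ (Fin p₁)) (vbarp : EuclideanSpace ℝ (Fin p₂)) (lambarp : EuclideanSpace ℝ (Fin n))
    (hlamstark : lamstark = β⁻¹ • (c - A ubar - B vbar))
    (hlamhat : lamhat = (1 - τ) • lambar + τ • lamstark)
    (huhat : uhat ∈ domg ∧ ∀ u ∈ domg,
      g uhat - ⟪(ContinuousLinearMap.adjoint A) lamhat, uhat⟫ + γp * breg ω ω' uhat uc
        ≤ g u - ⟪(ContinuousLinearMap.adjoint A) lamhat, u⟫ + γp * breg ω ω' u uc)
    (hvhat : vhat ∈ domh ∧ ∀ v ∈ domh,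
      h vhat - ⟪(ContinuousLinearMap.adjoint B) lamhat, vhat⟫ + η/2 * ‖A uhat + B vhat - c‖^2
        ≤ h v - ⟪(ContinuousLinearMap.adjoint B) lamhat, v⟫ + η/2 * ‖A uhat + B v - c‖^2)
    (hlambarp : lambarp = lamhat - η • (A uhat + B vhat - c))
    (hubarp : ubarp = (1 - τ) • ubar + τ • uhat)
    (hvbarp : vbarp = (1 - τ) • vbar + τ • vhat) :
    G γp βp ubarp vbarp lambarp ≤ (1 - τ) * G γ β ubar vbar lambar + η * τ^2/4 * Df^2 := by
  let P : SeparableProblem _ _ _ := ⟨g, domg, h, domh, A, B, c⟩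
  let b (γ : ℝ) (u) := γ * breg ω ω' u uc
  simp only [ContinuousLinearMap.adjoint_inner_left] at huhat hvhat
  have hgLUB {γ : ℝ} (hγ : 0 < γ) (l) :
      IsLUB ((fun u => ⟪l, A u⟫ - (g u + b γ u)) '' domg) (gS γ (A.adjoint l)) := by
    obtain ⟨hmem, hmax, -, hval⟩ := hgS γ hγ (A.adjoint l)
    simp only [ContinuousLinearMap.adjoint_inner_left, sub_sub] at hmax hval
    exact IsGreatest.isLUB ⟨⟨_, hmem, hval.symm⟩, Set.forall_mem_image.2 (hval ▸ hmax)⟩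
  have hhLUB (l) : IsLUB ((fun v => ⟪l, B v⟫ - h v) '' domh) (hstar (B.adjoint l)) := by
    simpa only [ContinuousLinearMap.adjoint_inner_left] using hhstar (B.adjoint l)
  have hGgap {γ : ℝ} (hγ : 0 < γ) (β u v l) : G γ β u v l = P.smoothedGap (b γ) β u v l := by
    rw [hGdef, hdG, SeparableProblem.smoothedGap,
      P.smoothedDual_eq_of_isLUB hgne hhne (hgLUB hγ l) (hhLUB l)]
    rfl
  rw [hGgap hγp, hGgap hγ, hubarp, hvbarp, hlambarp]
  exact stmt_6_general P hgconv hhconv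
    (by simpa using strongConvexOn_const_mul hγp.le (strongConvexOn_breg hωsc))
    (fun u hu => one_sub_mul_breg_le hωsc (fun y _ => (hωgrad y).hasFDerivAt.hasFDerivWithinAt)
      hωlip.lipschitzOnWith (Set.Ioc_subset_Icc_self hτ) hγp.le
      (by rwa [Real.coe_toNNReal _ hLb.le]) huc hu)
    (fun u hu v hv => hDf.1 ⟨u, hu, v, hv, rfl⟩) hτ.1.le hβ hηpos.le hc2
    (sq_le_of_two_mul_sq_mul_sq_le hγp hc4 hc3) hc4.le hubar hvbar ⟨_, (hgLUB hγ _).1⟩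
    ⟨_, (hhLUB _).1⟩ (by rw [hlamhat, hlamstark, SeparableProblem.residual]; module)
    huhat.1 huhat.2 hvhat.1 hvhat.2
end
end

section
/- Let γ₁ > 0 and M > 0 (playing the role of ‖A‖²), and for every integer k ≥ 1 define τ_k := 3/(k+4), γ_k := 5γ₁/(k+4), β_k := 18M(k+5)/(5γ₁(k+1)(k+7)), and η_k := 5γ₁/(2M(k+5)). Then for every k ≥ 1: (1+τ_k)γ_{k+1} ≥ γ_k, β_{k+1} ≥ (1−τ_k)β_k, (1−τ_k²)γ_{k+1}β_k ≥ 2Mτ_k², 2Mη_k = γ_{k+1}, and β_k ≤ 18M/(5γ₁(k+1)). -/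
/-!
With `t = k + 4`, `a = 3`, `c = 5γ₁` the parameters are `τ = a / t`, `γ = c / t`, and `β` is the
value for which the third condition `(1 - τ²) γ⁺ β = 2Mτ²` is an equality (a superscript `⁺`
means evaluation at `t + 1`). For arbitrary `a < t`, the three inequalities that remain have slack
proportional to `a - 1`, so the conditions hold as soon as `1 ≤ a`.
-/

open scoped RealInnerProductSpace

noncomputable section

section Field

variable {K : Type*} [Field K]

/-- The dual smoothness parameter `β` of the alternating minimization scheme, in terms of the
shifted index `t`, when the step is `τ = a / t`, the primal smoothness parameter is `γ = c / t` and
`M` is the squared operator norm. It is the solution of `(1 - τ²) γ⁺ β = 2Mτ²`, `γ⁺ = c / (t + 1)`,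
cleared of nested fractions. -/
def dualSmoothness (M c a t : K) : K :=
  2 * M * a ^ 2 * (t + 1) / (c * (t - a) * (t + a))

lemma one_sub_div_sq_mul_div_mul_dualSmoothness (M : K) {c a t : K} (hc : c ≠ 0) (ht : t ≠ 0)
    (ht_succ : t + 1 ≠ 0) (h_sub : t - a ≠ 0) (h_add : t + a ≠ 0) :
    (1 - (a / t) ^ 2) * (c / (t + 1)) * dualSmoothness M c a t = 2 * M * (a / t) ^ 2 := by
  have h_factor : 1 - (a / t) ^ 2 = (t - a) * (t + a) / t ^ 2 := by
    field_simp
    ring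
  rw [h_factor, dualSmoothness]
  field_simp

end Field

section LinearOrderedField

variable {K : Type*} [Field K] [LinearOrder K] [IsStrictOrderedRing K] {M c a t : K}

lemma div_le_one_add_div_mul_div_add_one (hc : 0 ≤ c) (ha : 1 ≤ a) (ht : 0 < t) :
    c / t ≤ (1 + a / t) * (c / (t + 1)) :=
  calc
    c / t = (1 + 1 / t) * (c / (t + 1)) := by field_simp
    _ ≤ (1 + a / t) * (c / (t + 1)) := by gcongr

lemma one_sub_div_mul_dualSmoothness_le (hM : 0 ≤ M) (hc : 0 < c) (ha : 1 ≤ a) (hat : a < t) :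
    (1 - a / t) * dualSmoothness M c a t ≤ dualSmoothness M c a (t + 1) := by
  have : 0 ≤ a - 1 := sub_nonneg.2 ha
  have ht : 0 < t := by linarith
  have : 0 < t - a := sub_pos.2 hat
  have : 0 < t + 1 - a := by linarith
  have h_slack : dualSmoothness M c a (t + 1) - (1 - a / t) * dualSmoothness M c a t =
      2 * M * a ^ 2 * ((a - 1) * (t ^ 2 + (a + 3) * t + (a + 1))) /
        (c * t * (t + a) * (t + 1 - a) * (t + 1 + a)) := by
    unfold dualSmoothness
    field_simp
    ring
  rw [← sub_nonneg, h_slack]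
  positivity

lemma dualSmoothness_le_div (hM : 0 ≤ M) (hc : 0 < c) (ha : 1 ≤ a) (hat : a < t) :
    dualSmoothness M c a t ≤ 2 * M * a ^ 2 / (c * (t - a)) := by
  have : 0 < t - a := sub_pos.2 hat
  have h_ratio : (t + 1) / (t + a) ≤ 1 := div_le_one_of_le₀ (by linarith) (by linarith)
  calc
    dualSmoothness M c a t = 2 * M * a ^ 2 / (c * (t - a)) * ((t + 1) / (t + a)) :=
      (div_mul_div_comm _ _ _ _).symm
    _ ≤ 2 * M * a ^ 2 / (c * (t - a)) := mul_le_of_le_one_right (by positivity) h_ratio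

theorem stmt_8_general {s : K} (hM : 0 < M) (hc : 0 < c) (ha : 1 ≤ a) (τ γ β η : ℕ → K)
    (hτ : ∀ k : ℕ, τ k = a / (k + s)) (hγ : ∀ k : ℕ, γ k = c / (k + s))
    (hβ : ∀ k : ℕ, β k = dualSmoothness M c a (k + s))
    (hη : ∀ k : ℕ, η k = c / (2 * M * (k + s + 1))) (k : ℕ) (hk : a < k + s) :
    (1 + τ k) * γ (k + 1) ≥ γ k ∧
      β (k + 1) ≥ (1 - τ k) * β k ∧
      (1 - τ k ^ 2) * γ (k + 1) * β k = 2 * M * τ k ^ 2 ∧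
      2 * M * η k = γ (k + 1) ∧
      β k ≤ 2 * M * a ^ 2 / (c * (k + s - a)) := by
  have h_succ : ((k + 1 : ℕ) : K) + s = k + s + 1 := by rw [Nat.cast_succ, add_right_comm]
  rw [hτ, hγ, hγ, hβ, hβ, hη, h_succ]
  generalize (k : K) + s = t at hk ⊢
  have ht : 0 < t := by linarith
  have h_eq : (1 - (a / t) ^ 2) * (c / (t + 1)) * dualSmoothness M c a t = 2 * M * (a / t) ^ 2 :=
    one_sub_div_sq_mul_div_mul_dualSmoothness M hc.ne' ht.ne' (by linarith) (sub_pos.2 hk).ne'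
      (by linarith)
  exact ⟨div_le_one_add_div_mul_div_add_one hc.le ha ht,
    one_sub_div_mul_dualSmoothness_le hM.le hc ha hk, h_eq, by field_simp,
    dualSmoothness_le_div hM.le hc ha hk⟩

end LinearOrderedField

theorem stmt_8 (γ₁ M : ℝ) (hγ₁ : 0 < γ₁) (hM : 0 < M)
    (τ γ β η : ℕ → ℝ)
    (hτ : ∀ k : ℕ, τ k = 3/((k:ℝ)+4))
    (hγ : ∀ k : ℕ, γ k = 5*γ₁/((k:ℝ)+4))
    (hβ : ∀ k : ℕ, β k = 18*M*((k:ℝ)+5)/(5*γ₁*((k:ℝ)+1)*((k:ℝ)+7)))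
    (hη : ∀ k : ℕ, η k = 5*γ₁/(2*M*((k:ℝ)+5))) :
    ∀ k : ℕ, 1 ≤ k →
      (1 + τ k) * γ (k+1) ≥ γ k ∧
      β (k+1) ≥ (1 - τ k) * β k ∧
      (1 - (τ k)^2) * γ (k+1) * β k ≥ 2*M*(τ k)^2 ∧
      2*M*η k = γ (k+1) ∧
      β k ≤ 18*M/(5*γ₁*((k:ℝ)+1)) := by
  intro k _
  obtain ⟨h₁, h₂, h₃, h₄, h₅⟩ := stmt_8_general (a := 3) (c := 5 * γ₁) (s := 4) hM (by positivity)
    (by norm_num) τ γ β η hτ hγ (fun k ↦ by rw [hβ, dualSmoothness]; ring_nf)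
    (fun k ↦ by rw [hη]; ring_nf) k (by linarith [k.cast_nonneg (α := ℝ)])
  exact ⟨h₁, h₂, h₃.ge, h₄, h₅.trans_eq (by ring_nf)⟩
end
end

section
/- Suppose g is in addition μ_g-strongly convex with μ_g > 0. Let k ≥ 0 and suppose (ūᵏ, v̄ᵏ, λ̄ᵏ) ∈ dom g × dom h × ℝⁿ and the next iterate is generated by: λ*_k := (1/β_k)(c − Aūᵏ − Bv̄ᵏ); λ̂ᵏ := (1−τ_k)λ̄ᵏ + τ_kλ*_k; ûᵏ⁺¹ minimizes u ↦ g(u) − ⟨Aᵀλ̂ᵏ, u⟩; v̂ᵏ⁺¹ minimizes v ↦ h(v) − ⟨Bᵀλ̂ᵏ, v⟩ + (η_k/2)‖Aûᵏ⁺¹ + Bv − c‖²; λ̄ᵏ⁺¹ := λ̂ᵏ − η_k(Aûᵏ⁺¹ + Bv̂ᵏ⁺¹ − c); (ūᵏ⁺¹, v̄ᵏ⁺¹) := (1−τ_k)(ūᵏ, v̄ᵏ) + τ_k(ûᵏ⁺¹, v̂ᵏ⁺¹). If τ_k ∈ (0,1), β_{k+1} ≥ (1−τ_k)β_k and η_k·(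 3/2 + τ_k − ‖A‖²η_k/μ_g ) ≥ τ_k²/((1−τ_k)β_k), then G_{β_{k+1}}(w̄ᵏ⁺¹) ≤ (1−τ_k)·G_{β_k}(w̄ᵏ) + (τ_k²η_k/4)·D_f², where G_β(w) := f_β(x) + d(λ) and w̄ᵏ = (ūᵏ, v̄ᵏ, λ̄ᵏ). -/
open scoped RealInnerProductSpace

noncomputable section

/-!
Write `r = A û + B v̂ - c`, `r̄ = A ū + B v̄ - c` and `L = ‖A‖² / μg`, so that `λ̄⁺ = λ̂ - η r`.

On the dual side, `û` minimizes a strongly convex function, whose quadratic growth makes `g* ∘ Aᵀ`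
`L`-smooth at `λ̂`, while optimality of `v̂` says `Bᵀλ̄⁺ ∈ ∂h(v̂)`. Together they give
`d(λ̄⁺) ≤ ⟪λ̄⁺, r⟫ - g(û) - h(v̂) + L η² / 2 ‖r‖²`, to be compared with
`d(λ̄) ≥ ⟪λ̄, r⟫ - g(û) - h(v̂)`. On the primal side, the square
`‖(1 - τ) r̄ + τ r‖² / (2 (1 - τ) β)` is expanded, and its cross term `τ ⟪r̄, r⟫ / β` cancels the
term `τ ⟪λ*, r⟫` of the dual side, because `λ* = -r̄ / β`. What remains is
`(τ² / (2 (1 - τ) β) - η + L η² / 2) ‖r‖²`, and the parameter condition bounds this coefficient by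
`η (τ / 2 - 1 / 4) ≤ τ² η / 4`.
-/

open Set Filter Topology

section Minimizers

lemma add_le_of_isMinOn_of_forall_segment_le {E : Type*} [AddCommGroup E] [Module ℝ E] {s : Set E}
    {f : E → ℝ} {x u : E} {q : ℝ} (hs : Convex ℝ s) (hx : x ∈ s) (hu : u ∈ s)
    (hmin : IsMinOn f s x)
    (hq : ∀ t ∈ Ioo (0 : ℝ) 1,
      f (t • u + (1 - t) • x) ≤ t * f u + (1 - t) * f x - t * (1 - t) * q) :
    f x + q ≤ f u := by
  have hlt : ∀ t ∈ Ioo (0 : ℝ) 1, f x + (1 - t) * q ≤ f u := by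
    intro t ht
    have hmem : t • u + (1 - t) • x ∈ s := hs hu hx ht.1.le (sub_nonneg.2 ht.2.le) (by ring)
    have hle : f x ≤ t * f u + (1 - t) * f x - t * (1 - t) * q :=
      (isMinOn_iff.1 hmin _ hmem).trans (hq t ht)
    refine le_of_mul_le_mul_left ?_ ht.1
    linarith
  have hlim : Tendsto (fun t : ℝ ↦ f x + (1 - t) * q) (𝓝[>] 0) (𝓝 (f x + q)) := by
    have hcont : Continuous fun t : ℝ ↦ f x + (1 - t) * q := by fun_prop
    simpa using hcont.continuousWithinAt.tendsto (s := Ioi 0) (x := 0)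
  exact le_of_tendsto hlim (mem_of_superset (Ioo_mem_nhdsGT one_pos) hlt)

lemma uniformConvexOn_add_le_of_isMinOn {E : Type*} [NormedAddCommGroup E] [NormedSpace ℝ E]
    {s : Set E} {f : E → ℝ} {φ : ℝ → ℝ} {x u : E} (hf : UniformConvexOn s φ f) (hx : x ∈ s)
    (hu : u ∈ s) (hmin : IsMinOn f s x) : f x + φ ‖u - x‖ ≤ f u :=
  add_le_of_isMinOn_of_forall_segment_le hf.1 hx hu hmin fun _ ht ↦
    hf.2 hu hx ht.1.le (sub_nonneg.2 ht.2.le) (by ring)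

variable {F : Type*} [NormedAddCommGroup F] [InnerProductSpace ℝ F]

lemma norm_smul_add_one_sub_smul_sq (t : ℝ) (a b : F) :
    ‖t • a + (1 - t) • b‖ ^ 2
      = t * ‖a‖ ^ 2 + (1 - t) * ‖b‖ ^ 2 - t * (1 - t) * ‖a - b‖ ^ 2 := by
  simp only [← real_inner_self_eq_norm_sq, inner_add_left, inner_add_right, inner_sub_left,
    inner_sub_right, real_inner_smul_left, real_inner_smul_right, real_inner_comm a b]
  ring

/- This is smoothness of `g* ∘ Aᵀ`, term by term in the supremum defining `g*`: at `l` its value is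
`⟪l, A x⟫ - g x` and its gradient is `A x`. -/
lemma inner_sub_le_of_isMinOn_of_strongConvexOn {E : Type*} [NormedAddCommGroup E]
    [NormedSpace ℝ E] {s : Set E} {g : E → ℝ} {m : ℝ} (hm : 0 < m) (hg : StrongConvexOn s m g)
    (A : E →L[ℝ] F) {l l' : F} {x u : E} (hx : x ∈ s) (hu : u ∈ s)
    (hmin : IsMinOn (fun u ↦ g u - ⟪l, A u⟫) s x) :
    ⟪l', A u⟫ - g u ≤ ⟪l', A x⟫ - g x + ‖A‖ ^ 2 / m / 2 * ‖l' - l‖ ^ 2 := by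
  have hlin : ConcaveOn ℝ s fun u ↦ ⟪l, A u⟫ :=
    ((innerₛₗ ℝ l).comp (A : E →ₗ[ℝ] F)).concaveOn hg.1
  have hgrowth : g x - ⟪l, A x⟫ + m / 2 * ‖u - x‖ ^ 2 ≤ g u - ⟪l, A u⟫ := by
    simpa using uniformConvexOn_add_le_of_isMinOn (hg.sub (uniformConcaveOn_zero.2 hlin)) hx hu hmin
  have hcauchy : ⟪l' - l, A u - A x⟫ ≤ ‖l' - l‖ * (‖A‖ * ‖u - x‖) := by
    rw [← map_sub]
    exact (real_inner_le_norm _ _).trans (by gcongr; exact A.le_opNorm _)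
  have hyoung : ‖l' - l‖ * (‖A‖ * ‖u - x‖)
      ≤ m / 2 * ‖u - x‖ ^ 2 + ‖A‖ ^ 2 / m / 2 * ‖l' - l‖ ^ 2 := by
    have hsq : 0 ≤ (m * ‖u - x‖ - ‖A‖ * ‖l' - l‖) ^ 2 / (2 * m) := by positivity
    have hexpand : (m * ‖u - x‖ - ‖A‖ * ‖l' - l‖) ^ 2 / (2 * m)
        = m / 2 * ‖u - x‖ ^ 2 + ‖A‖ ^ 2 / m / 2 * ‖l' - l‖ ^ 2
          - ‖l' - l‖ * (‖A‖ * ‖u - x‖) := by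
      field_simp
      ring
    linarith
  simp only [inner_sub_left, inner_sub_right] at hcauchy
  linarith

/- In terms of subgradients: `Bᵀ(l - η (a + B x)) ∈ ∂h(x)`. -/
lemma isMaxOn_inner_sub_of_isMinOn_add_norm_sq {E : Type*} [AddCommGroup E] [Module ℝ E]
    {s : Set E} {h : E → ℝ} (hh : ConvexOn ℝ s h) (B : E →ₗ[ℝ] F) {a l : F} {η : ℝ} {x : E}
    (hx : x ∈ s) (hmin : IsMinOn (fun v ↦ h v - ⟪l, B v⟫ + η / 2 * ‖a + B v‖ ^ 2) s x) :
    IsMaxOn (fun v ↦ ⟪l - η • (a + B x), B v⟫ - h v) s x := by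
  refine isMaxOn_iff.2 fun v hv ↦ ?_
  have hgrowth := add_le_of_isMinOn_of_forall_segment_le (q := η / 2 * ‖B v - B x‖ ^ 2)
    hh.1 hx hv hmin fun t ht ↦ by
      have hconv := hh.2 hv hx ht.1.le (sub_nonneg.2 ht.2.le) (by ring)
      have hcomb : a + B (t • v + (1 - t) • x) = t • (a + B v) + (1 - t) • (a + B x) := by
        rw [map_add, map_smul, map_smul]
        module
      have hsq := norm_smul_add_one_sub_smul_sq t (a + B v) (a + B x)
      rw [add_sub_add_left_eq_sub] at hsq
      rw [hcomb, hsq]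
      simp only [map_add, map_smul, inner_add_right, real_inner_smul_right, smul_eq_mul] at hconv ⊢
      linarith
  have hpolar : ‖a + B v‖ ^ 2
      = ‖a + B x‖ ^ 2 + 2 * ⟪a + B x, B v - B x⟫ + ‖B v - B x‖ ^ 2 := by
    rw [← norm_add_sq_real, add_add_sub_cancel]
  rw [hpolar, inner_sub_right] at hgrowth
  simp only [inner_sub_left, real_inner_smul_left]
  linarith

end Minimizers

section SmoothedGap

variable {E₁ E₂ F : Type*} [NormedAddCommGroup F] [InnerProductSpace ℝ F]

/-- The violation `A u + B v - c` of the linear constraint `A u + B v = c`. -/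
def primalResidual (A : E₁ → F) (B : E₂ → F) (c : F) (u : E₁) (v : E₂) : F := A u + B v - c

/-- The primal objective `f_β` of the constrained problem, in which the constraint is replaced by a
quadratic penalty with smoothing parameter `β`. The functions `g` and `h` are represented by their
real values, so this is meaningful only on `dom g × dom h`. -/
def smoothedObjective (g : E₁ → ℝ) (h : E₂ → ℝ) (A : E₁ → F) (B : E₂ → F) (c : F) (β : ℝ)
    (u : E₁) (v : E₂) : ℝ :=
  g u + h v + 1 / (2 * β) * ‖primalResidual A B c u v‖ ^ 2

/-- `y` is the value at the multiplier `l` of the dual function `d` of minimizing `g u + h v` over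
`u ∈ s`, `v ∈ t` subject to `A u + B v = c`; this is `g*(Aᵀ l) + h*(Bᵀ l) - ⟪c, l⟫`, the two suprema
being merged so that no adjoint is needed. As a relation it also records that the supremum is
finite. -/
def IsDualValue (g : E₁ → ℝ) (s : Set E₁) (h : E₂ → ℝ) (t : Set E₂) (A : E₁ → F) (B : E₂ → F)
    (c l : F) (y : ℝ) : Prop :=
  IsLUB (image2 (fun u v ↦ ⟪l, primalResidual A B c u v⟫ - g u - h v) s t) y

lemma isDualValue_of_isLUB_conjugate [CompleteSpace F] [NormedAddCommGroup E₁]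
    [InnerProductSpace ℝ E₁] [CompleteSpace E₁] [NormedAddCommGroup E₂] [InnerProductSpace ℝ E₂]
    [CompleteSpace E₂] {g : E₁ → ℝ} {s : Set E₁} {h : E₂ → ℝ} {t : Set E₂} {A : E₁ →L[ℝ] F}
    {B : E₂ →L[ℝ] F} {c l : F} {a b : ℝ}
    (hg : IsLUB ((fun u ↦ ⟪ContinuousLinearMap.adjoint A l, u⟫ - g u) '' s) a)
    (hh : IsLUB ((fun v ↦ ⟪ContinuousLinearMap.adjoint B l, v⟫ - h v) '' t) b) :
    IsDualValue g s h t A B c l (a + b - ⟪c, l⟫) := by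
  have hterm : ∀ u v, ⟪l, primalResidual A B c u v⟫ - g u - h v
      = (⟪ContinuousLinearMap.adjoint A l, u⟫ - g u)
        + (⟪ContinuousLinearMap.adjoint B l, v⟫ - h v) + -⟪c, l⟫ := fun u v ↦ by
    rw [primalResidual, inner_sub_right, inner_add_right, ContinuousLinearMap.adjoint_inner_left,
      ContinuousLinearMap.adjoint_inner_left, real_inner_comm l c]
    ring
  have hsum := (hg.add hh).add (isLUB_singleton (a := -⟪c, l⟫))
  rw [add_singleton, ← image2_add, image2_image_left, image2_image_right, image_image2,
    ← sub_eq_add_neg] at hsum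
  simpa only [IsDualValue, hterm] using hsum

section Linear

variable [AddCommGroup E₂] [Module ℝ E₂] {g : E₁ → ℝ} {s : Set E₁} {h : E₂ → ℝ} {t : Set E₂}
  {B : E₂ →ₗ[ℝ] F} {c : F} {u uhat : E₁} {v vhat : E₂} {τ β βp : ℝ}

lemma penalty_convexComb_le (hτ : τ ∈ Ioo (0 : ℝ) 1) (hβ : 0 < β) (hβp : (1 - τ) * β ≤ βp)
    (a b : F) :
    1 / (2 * βp) * ‖(1 - τ) • a + τ • b‖ ^ 2
      ≤ (1 - τ) * (1 / (2 * β) * ‖a‖ ^ 2) + τ * (β⁻¹ * ⟪a, b⟫)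
        + τ ^ 2 / ((1 - τ) * β) / 2 * ‖b‖ ^ 2 := by
  have hτ' : 0 < 1 - τ := sub_pos.2 hτ.2
  calc
    _ ≤ 1 / (2 * ((1 - τ) * β)) * ‖(1 - τ) • a + τ • b‖ ^ 2 := by gcongr
    _ = _ := by
      rw [norm_add_sq_real, real_inner_smul_left, real_inner_smul_right, norm_smul_of_nonneg hτ'.le,
        norm_smul_of_nonneg hτ.1.le]
      field_simp

lemma smoothedObjective_convexComb_le [AddCommGroup E₁] [Module ℝ E₁] {A : E₁ →ₗ[ℝ] F}
    (hg : ConvexOn ℝ s g) (hh : ConvexOn ℝ t h) (hu : u ∈ s) (hv : v ∈ t) (huhat : uhat ∈ s)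
    (hvhat : vhat ∈ t) (hτ : τ ∈ Ioo (0 : ℝ) 1) (hβ : 0 < β) (hβp : (1 - τ) * β ≤ βp) :
    smoothedObjective g h A B c βp ((1 - τ) • u + τ • uhat) ((1 - τ) • v + τ • vhat)
      ≤ (1 - τ) * smoothedObjective g h A B c β u v
        + τ * (g uhat + h vhat + β⁻¹ * ⟪primalResidual A B c u v, primalResidual A B c uhat vhat⟫)
        + τ ^ 2 / ((1 - τ) * β) / 2 * ‖primalResidual A B c uhat vhat‖ ^ 2 := by
  have hτ' : 0 < 1 - τ := sub_pos.2 hτ.2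
  have hres : primalResidual A B c ((1 - τ) • u + τ • uhat) ((1 - τ) • v + τ • vhat)
      = (1 - τ) • primalResidual A B c u v + τ • primalResidual A B c uhat vhat := by
    simp only [primalResidual, map_add, map_smul]
    module
  have hgconv := hg.2 hu huhat hτ'.le hτ.1.le (by ring)
  have hhconv := hh.2 hv hvhat hτ'.le hτ.1.le (by ring)
  have hpenalty := penalty_convexComb_le hτ hβ hβp (primalResidual A B c u v)
    (primalResidual A B c uhat vhat)
  simp only [smoothedObjective, hres, smul_eq_mul] at hgconv hhconv ⊢
  linarith

variable [NormedAddCommGroup E₁] [NormedSpace ℝ E₁] {A : E₁ →L[ℝ] F} {μ η : ℝ} {l lhat : F}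
  {y yp : ℝ}

lemma isDualValue_le_of_isMinOn (hμ : 0 < μ) (hg : StrongConvexOn s μ g) (hh : ConvexOn ℝ t h)
    (huhat : uhat ∈ s) (hvhat : vhat ∈ t)
    (humin : IsMinOn (fun u ↦ g u - ⟪lhat, A u⟫) s uhat)
    (hvmin : IsMinOn
      (fun v ↦ h v - ⟪lhat, B v⟫ + η / 2 * ‖primalResidual A B c uhat v‖ ^ 2) t vhat)
    (hy : IsDualValue g s h t A B c (lhat - η • primalResidual A B c uhat vhat) y) :
    y ≤ ⟪lhat, primalResidual A B c uhat vhat⟫ - g uhat - h vhat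
      - (η - ‖A‖ ^ 2 / μ / 2 * η ^ 2) * ‖primalResidual A B c uhat vhat‖ ^ 2 := by
  have hres : ∀ v, primalResidual A B c uhat v = A uhat - c + B v :=
    fun v ↦ add_sub_right_comm _ _ _
  simp only [hres] at hvmin
  have hvmax := isMaxOn_iff.1 (isMaxOn_inner_sub_of_isMinOn_add_norm_sq hh B hvhat hvmin)
  rw [← hres] at hvmax
  set r := primalResidual A B c uhat vhat with hr
  refine hy.2 (forall_mem_image2.2 fun u hu v hv ↦ ?_)
  have hudescent := inner_sub_le_of_isMinOn_of_strongConvexOn (l' := lhat - η • r)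
    hμ hg A huhat hu humin
  rw [sub_sub_cancel_left, norm_neg, norm_smul, mul_pow, Real.norm_eq_abs, sq_abs] at hudescent
  calc ⟪lhat - η • r, primalResidual A B c u v⟫ - g u - h v
      = (⟪lhat - η • r, A u⟫ - g u) + (⟪lhat - η • r, B v⟫ - h v) - ⟪lhat - η • r, c⟫ := by
        rw [primalResidual, inner_sub_right, inner_add_right]
        ring
    _ ≤ (⟪lhat - η • r, A uhat⟫ - g uhat + ‖A‖ ^ 2 / μ / 2 * (η ^ 2 * ‖r‖ ^ 2))
        + (⟪lhat - η • r, B vhat⟫ - h vhat) - ⟪lhat - η • r, c⟫ := by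
        have hvle := hvmax v hv
        linarith
    _ = ⟪lhat - η • r, r⟫ - g uhat - h vhat + ‖A‖ ^ 2 / μ / 2 * (η ^ 2 * ‖r‖ ^ 2) := by
        rw [hr, primalResidual, inner_sub_right _ _ c, inner_add_right]
        ring
    _ = ⟪lhat, r⟫ - g uhat - h vhat - (η - ‖A‖ ^ 2 / μ / 2 * η ^ 2) * ‖r‖ ^ 2 := by
        rw [inner_sub_left, real_inner_smul_left, real_inner_self_eq_norm_sq]
        ring

/- The slack is `η (1 - τ)² / 4`. -/
lemma penalty_coefficient_le {κ L : ℝ} (hη : 0 ≤ η) (hκ : κ ≤ η * (3 / 2 + τ - L * η)) :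
    κ / 2 - (η - L / 2 * η ^ 2) ≤ τ ^ 2 * η / 4 := by
  have hslack : 0 ≤ η * (1 - τ) ^ 2 := by positivity
  linarith

theorem stmt_10_general {lstar lp : F} {up : E₁} {vp : E₂} (hg : StrongConvexOn s μ g) (hμ : 0 < μ)
    (hh : ConvexOn ℝ t h) (hu : u ∈ s) (hv : v ∈ t) (hτ : τ ∈ Ioo (0 : ℝ) 1) (hβ : 0 < β)
    (hη : 0 ≤ η) (hβp : (1 - τ) * β ≤ βp)
    (hκ : τ ^ 2 / ((1 - τ) * β) ≤ η * (3 / 2 + τ - ‖A‖ ^ 2 * η / μ))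
    (hlstar : lstar = β⁻¹ • (c - A u - B v)) (hlhat : lhat = (1 - τ) • l + τ • lstar)
    (huhat : uhat ∈ s) (humin : IsMinOn (fun u ↦ g u - ⟪lhat, A u⟫) s uhat)
    (hvhat : vhat ∈ t)
    (hvmin : IsMinOn (fun v ↦ h v - ⟪lhat, B v⟫ + η / 2 * ‖A uhat + B v - c‖ ^ 2) t vhat)
    (hlp : lp = lhat - η • (A uhat + B vhat - c)) (hup : up = (1 - τ) • u + τ • uhat)
    (hvp : vp = (1 - τ) • v + τ • vhat) (hy : IsDualValue g s h t A B c l y)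
    (hyp : IsDualValue g s h t A B c lp yp) :
    smoothedObjective g h A B c βp up vp + yp
      ≤ (1 - τ) * (smoothedObjective g h A B c β u v + y)
        + τ ^ 2 * η / 4 * ‖A uhat + B vhat - c‖ ^ 2 := by
  subst hlp hup hvp
  have hprimal := smoothedObjective_convexComb_le (A := A.toLinearMap) (B := B) (c := c)
    (hg.convexOn fun r ↦ by positivity) hh hu hv huhat hvhat hτ hβ hβp
  have hdual := isDualValue_le_of_isMinOn hμ hg hh huhat hvhat humin hvmin hyp
  simp only [ContinuousLinearMap.coe_coe] at hprimal
  change _ ≤ _ + _ * ‖primalResidual A B c uhat vhat‖ ^ 2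
  set r := primalResidual A B c uhat vhat
  have hfenchel : ⟪l, r⟫ - g uhat - h vhat ≤ y := hy.1 (mem_image2_of_mem huhat hvhat)
  have hcross : ⟪lhat, r⟫ = (1 - τ) * ⟪l, r⟫ - τ * (β⁻¹ * ⟪primalResidual A B c u v, r⟫) := by
    have hneg : c - A u - B v = -primalResidual A B c u v := by
      rw [primalResidual]
      abel
    rw [hlhat, hlstar, hneg, inner_add_left, real_inner_smul_left, real_inner_smul_left,
      real_inner_smul_left, inner_neg_left]
    ring
  rw [mul_div_right_comm] at hκ
  have hcoef := mul_le_mul_of_nonneg_right (penalty_coefficient_le hη hκ) (sq_nonneg ‖r‖)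
  have hfenchel' := mul_le_mul_of_nonneg_left hfenchel (sub_nonneg.2 hτ.2.le)
  linarith

end Linear

end SmoothedGap

theorem stmt_10 {p₁ p₂ n : ℕ}
    (g : EuclideanSpace ℝ (Fin p₁) → ℝ) (domg : Set (EuclideanSpace ℝ (Fin p₁)))
    (h : EuclideanSpace ℝ (Fin p₂) → ℝ) (domh : Set (EuclideanSpace ℝ (Fin p₂)))
    (A : EuclideanSpace ℝ (Fin p₁) →L[ℝ] EuclideanSpace ℝ (Fin n))
    (B : EuclideanSpace ℝ (Fin p₂) →L[ℝ] EuclideanSpace ℝ (Fin n))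
    (c : EuclideanSpace ℝ (Fin n))
    (hgconv : ConvexOn ℝ domg g) (hglsc : LowerSemicontinuousOn g domg)
    (hgne : domg.Nonempty)
    (hhconv : ConvexOn ℝ domh h) (hhlsc : LowerSemicontinuousOn h domh)
    (hhne : domh.Nonempty)
    (gstar : EuclideanSpace ℝ (Fin p₁) → ℝ) (hstar : EuclideanSpace ℝ (Fin p₂) → ℝ)
    (hgstar : ∀ z, IsLUB ((fun u => ⟪z, u⟫ - g u) '' domg) (gstar z))
    (hhstar : ∀ z, IsLUB ((fun v => ⟪z, v⟫ - h v) '' domh) (hstar z))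
    (d : EuclideanSpace ℝ (Fin n) → ℝ)
    (hd : ∀ lam, d lam = gstar ((ContinuousLinearMap.adjoint A) lam) + hstar ((ContinuousLinearMap.adjoint B) lam) - ⟪c, lam⟫)
    (Df : ℝ)
    (hDf : IsLUB {r : ℝ | ∃ u ∈ domg, ∃ v ∈ domh, r = ‖A u + B v - c‖} Df)
    (μg : ℝ) (hμg : 0 < μg) (hgsc : StrongConvexOn domg μg g)
    (Gb : ℝ → EuclideanSpace ℝ (Fin p₁) → EuclideanSpace ℝ (Fin p₂) → EuclideanSpace ℝ (Fin n) → ℝ)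
    (hGb : ∀ β u v lam, Gb β u v lam
      = g u + h v + 1/(2*β) * ‖A u + B v - c‖^2 + d lam)
    (ubar : EuclideanSpace ℝ (Fin p₁)) (vbar : EuclideanSpace ℝ (Fin p₂)) (lambar : EuclideanSpace ℝ (Fin n))
    (hubar : ubar ∈ domg) (hvbar : vbar ∈ domh)
    (τ β βp η : ℝ)
    (hτ : τ ∈ Set.Ioo (0:ℝ) 1) (hβ : 0 < β) (hβp : 0 < βp) (hηpos : 0 < η)
    (hc1 : βp ≥ (1 - τ) * β)
    (hc2 : η * (3/2 + τ - ‖A‖^2 * η / μg) ≥ τ^2/((1 - τ) * β))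
    (lamstark lamhat : EuclideanSpace ℝ (Fin n)) (uhat : EuclideanSpace ℝ (Fin p₁)) (vhat : EuclideanSpace ℝ (Fin p₂))
    (ubarp : EuclideanSpace ℝ (Fin p₁)) (vbarp : EuclideanSpace ℝ (Fin p₂)) (lambarp : EuclideanSpace ℝ (Fin n))
    (hlamstark : lamstark = β⁻¹ • (c - A ubar - B vbar))
    (hlamhat : lamhat = (1 - τ) • lambar + τ • lamstark)
    (huhat : uhat ∈ domg ∧ ∀ u ∈ domg,
      g uhat - ⟪(ContinuousLinearMap.adjoint A) lamhat, uhat⟫ ≤ g u - ⟪(ContinuousLinearMap.adjoint A) lamhat, u⟫)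
    (hvhat : vhat ∈ domh ∧ ∀ v ∈ domh,
      h vhat - ⟪(ContinuousLinearMap.adjoint B) lamhat, vhat⟫ + η/2 * ‖A uhat + B vhat - c‖^2
        ≤ h v - ⟪(ContinuousLinearMap.adjoint B) lamhat, v⟫ + η/2 * ‖A uhat + B v - c‖^2)
    (hlambarp : lambarp = lamhat - η • (A uhat + B vhat - c))
    (hubarp : ubarp = (1 - τ) • ubar + τ • uhat)
    (hvbarp : vbarp = (1 - τ) • vbar + τ • vhat) :
    Gb βp ubarp vbarp lambarp ≤ (1 - τ) * Gb β ubar vbar lambar + τ^2 * η/4 * Df^2 := by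
  have hG (β u v l) : Gb β u v l = smoothedObjective g h A B c β u v + d l := hGb β u v l
  have hdual (l) : IsDualValue g domg h domh A B c l (d l) :=
    hd l ▸ isDualValue_of_isLUB_conjugate (hgstar _) (hhstar _)
  have hresidual : ‖A uhat + B vhat - c‖ ≤ Df := hDf.1 ⟨uhat, huhat.1, vhat, hvhat.1, rfl⟩
  simp only [ContinuousLinearMap.adjoint_inner_left] at huhat hvhat
  rw [hG, hG]
  exact (stmt_10_general (B := B.toLinearMap) hgsc hμg hhconv hubar hvbar hτ hβ hηpos.le hc1 hc2
    hlamstark hlamhat huhat.1 (isMinOn_iff.2 huhat.2) hvhat.1 (isMinOn_iff.2 hvhat.2) hlambarp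
    hubarp hvbarp (hdual lambar) (hdual lambarp)).trans
      (add_le_add le_rfl (by gcongr; exact hresidual))
end
end

section
/- Suppose g is in addition μ_g-strongly convex with μ_g > 0, ‖A‖ > 0, and (u⋆, v⋆, λ⋆) is a KKT point with f⋆ = f(u⋆,v⋆) = −d(λ⋆). Run the strongly convex SAMA variant: initialize λ̂⁰ := 0, ū¹ := argmin_u { g(u) − ⟨Aᵀλ̂⁰, u⟩ }, v̄¹ := argmin_v { h(v) − ⟨Bᵀλ̂⁰, v⟩ + (η₀/2)‖Aū¹ + Bv − c‖² } with η₀ := μ_g/(2‖A‖²), λ̄¹ := λ̂⁰ − η₀(Aū¹ + Bv̄¹ − c), λ*₁ := β₁⁻¹(c − Aū¹ − Bv̄¹); and for k ≥ 1 use τ_k := 3/(k+4), η_k := μ_g/(2‖A‖²), β_k := 18‖A‖²/(μ_g(k+1)(k+7)), with iterates λ̂ᵏ := (1−τ_k)λ̄ᵏ + τ_kλ*_k; ûᵏ⁺¹ := argmin_u { g(u) − ⟨Aᵀλ̂ᵏ, u⟩ }; v̂ᵏ⁺¹ := argmin_v { h(v) − ⟨Bᵀλ̂ᵏ, v⟩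 + (η_k/2)‖Aûᵏ⁺¹ + Bv − c‖² }; λ̄ᵏ⁺¹ := λ̂ᵏ − η_k(Aûᵏ⁺¹ + Bv̂ᵏ⁺¹ − c); λ*_{k+1} := β_{k+1}⁻¹[(1−τ_k)β_kλ*_k + τ_kη_k⁻¹(λ̄ᵏ⁺¹ − λ̂ᵏ)]; (ūᵏ⁺¹,v̄ᵏ⁺¹) := (1−τ_k)(ūᵏ,v̄ᵏ) + τ_k(ûᵏ⁺¹,v̂ᵏ⁺¹). Then for every k ≥ 1: f(x̄ᵏ) − f⋆ ≤ 9μ_gD_f²/(16‖A‖²(k+3)) and ‖Aūᵏ + Bv̄ᵏ − c‖ ≤ 36‖A‖²‖λ⋆‖/(μ_g(k+1)(k+7)) + 9D_f/(2√((k+1)(k+3)(k+7))), where x̄ᵏ = (ūᵏ, v̄ᵏ). -/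
open scoped RealInnerProductSpace

noncomputable section

/-!
Let `f = g + h`, let `r = A u + B v - c` be the residual and `L(λ, x) = f(x) - ⟪λ, r(x)⟫` the
Lagrangian, so that `d(λ) = -inf L(λ, ·)`. Each iteration is a forward-backward step on `d`: strong
convexity of `g` makes the first dual summand smooth with constant `‖A‖²/μ ≤ 1/(2η)`, and the step
from `λ̂` decreases `d` enough that `L(λ̂, x̂) + (3η/4)‖r̂‖² ≤ L(λ⁺, ·)`.

The updates force `λ*_k = -β_k⁻¹ r̄ᵏ`. When `‖r̄ᵏ⁺¹‖²` is expanded, its cross term is then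
cancelled by the one coming from `λ̂ᵏ`, so the smoothed gap `G_k = f(x̄ᵏ) + d(λ̄ᵏ) + ‖r̄ᵏ‖²/(2β_k)`
satisfies `G_{k+1} ≤ (1 - τ_k) G_k + (η τ_k²/4) D²` as soon as `τ_k² ≤ η (1 - τ_k²) β_k` and
`(1 - τ_k) β_k ≤ β_{k+1}`. At a saddle point `(x⋆, λ⋆)` one has `-d(λ̄ᵏ) ≤ f⋆` and
`f⋆ ≤ L(λ⋆, x̄ᵏ)`; the first bounds the objective by `G_k`, and both together give a quadratic
inequality for `‖r̄ᵏ‖`.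
-/

lemma le_mul_add_sqrt_of_sq_le {R M S : ℝ} (hM : 0 ≤ M) (h : R ^ 2 ≤ M * R + S) :
    R ≤ M + √S := by
  by_contra! hR
  have hS : S < (R - M) ^ 2 := Real.lt_sq_of_sqrt_lt (by linarith)
  nlinarith [Real.sqrt_nonneg S]

lemma add_le_of_isMinOn_of_segment_le {E : Type*} [AddCommGroup E] [Module ℝ E] {s : Set E}
    {φ : E → ℝ} {x y : E} {q : ℝ} (hs : Convex ℝ s) (hx : x ∈ s) (hy : y ∈ s)
    (hmin : IsMinOn φ s x)
    (hseg : ∀ t : ℝ, 0 < t → t < 1 →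
      φ (t • y + (1 - t) • x) ≤ t * φ y + (1 - t) * φ x - t * (1 - t) * q) :
    φ x + q ≤ φ y := by
  have hlim : Filter.Tendsto (fun t : ℝ => φ x + (1 - t) * q) (nhdsWithin 0 (Set.Ioi 0))
      (nhds (φ x + q)) := by
    refine Filter.Tendsto.mono_left ?_ nhdsWithin_le_nhds
    exact Continuous.tendsto' (by fun_prop) _ _ (by ring)
  refine le_of_tendsto hlim ?_
  filter_upwards [Ioo_mem_nhdsGT (zero_lt_one (α := ℝ))] with t ⟨ht0, ht1⟩
  have hle : φ x ≤ φ (t • y + (1 - t) • x) :=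
    hmin (hs hy hx ht0.le (by linarith) (by ring))
  refine le_of_mul_le_mul_left ?_ ht0
  linarith [hseg t ht0 ht1]

lemma one_sub_three_div_mul_le {η k : ℝ} (hη : 0 < η) (hk : 0 ≤ k) :
    (1 - 3 / (k + 4)) * (9 / (η * (k + 1) * (k + 7)))
      ≤ 9 / (η * (k + 1 + 1) * (k + 1 + 7)) := calc
  (1 - 3 / (k + 4)) * (9 / (η * (k + 1) * (k + 7))) = 9 / (η * ((k + 4) * (k + 7))) := by
    field_simp
    ring
  _ ≤ 9 / (η * ((k + 1 + 1) * (k + 1 + 7))) := by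
    gcongr 9 / (η * ?_)
    linarith
  _ = 9 / (η * (k + 1 + 1) * (k + 1 + 7)) := by rw [mul_assoc]

lemma one_sub_three_div_mul_add_le {η k : ℝ} (hη : 0 ≤ η) (hk : 0 ≤ k) (D : ℝ) :
    (1 - 3 / (k + 4)) * (9 * η * D ^ 2 / (8 * (k + 3))) + η * (3 / (k + 4)) ^ 2 / 4 * D ^ 2
      ≤ 9 * η * D ^ 2 / (8 * (k + 1 + 3)) := calc
  (1 - 3 / (k + 4)) * (9 * η * D ^ 2 / (8 * (k + 3))) + η * (3 / (k + 4)) ^ 2 / 4 * D ^ 2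
      = 9 * η * D ^ 2 / 8 * ((k + 1) / ((k + 3) * (k + 4)) + 2 / ((k + 4) * (k + 4))) := by
    field_simp
    ring
  _ ≤ 9 * η * D ^ 2 / 8 * ((k + 1) / ((k + 3) * (k + 4)) + 2 / ((k + 3) * (k + 4))) := by
    gcongr
    norm_num
  _ = 9 * η * D ^ 2 / (8 * (k + 1 + 3)) := by
    rw [add_assoc k 1 3]
    field_simp
    ring

lemma three_div_add_four_lt_one {k : ℝ} (hk : 0 ≤ k) : 3 / (k + 4) < 1 := by
  rw [div_lt_one (by positivity)]
  linarith

section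

variable {E F G : Type*} [NormedAddCommGroup E] [NormedSpace ℝ E] [AddCommGroup F] [Module ℝ F]
  [NormedAddCommGroup G] [InnerProductSpace ℝ G]

lemma add_sq_le_of_isMinOn_strongConvexOn {f : E → ℝ} {s : Set E} {m : ℝ} {x y : E}
    (hf : StrongConvexOn s m f) (hmin : IsMinOn f s x) (hx : x ∈ s) (hy : y ∈ s) :
    f x + m / 2 * ‖y - x‖ ^ 2 ≤ f y :=
  add_le_of_isMinOn_of_segment_le hf.1 hx hy hmin fun _ ht0 ht1 =>
    hf.2 hy hx ht0.le (sub_nonneg.2 ht1.le) (by ring)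

-- Smoothness of the dual summand: moving the multiplier by `η • r` costs at most `η / 4 * ‖r‖ ^ 2`.
lemma sub_inner_le_of_isMinOn_strongConvexOn {g : E → ℝ} {s : Set E} {μ η : ℝ} {A : E →L[ℝ] G}
    {l : G} {u w : E} (hg : StrongConvexOn s μ g) (hη : 0 ≤ η) (hμ : 2 * η * ‖A‖ ^ 2 ≤ μ)
    (hmin : IsMinOn (fun w => g w - ⟪l, A w⟫) s u) (hu : u ∈ s) (hw : w ∈ s) (r : G) :
    g u - ⟪l - η • r, A u⟫ ≤ g w - ⟪l - η • r, A w⟫ + η / 4 * ‖r‖ ^ 2 := by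
  have hgrowth : g u - ⟪l, A u⟫ + μ / 2 * ‖w - u‖ ^ 2 ≤ g w - ⟪l, A w⟫ := by
    refine add_sq_le_of_isMinOn_strongConvexOn (f := fun w => g w - ⟪l, A w⟫) ?_ hmin hu hw
    have hlin : ConcaveOn ℝ s fun w => ⟪l, A w⟫ :=
      ((innerSL ℝ l).comp A).toLinearMap.concaveOn hg.1
    simpa only [add_zero] using! UniformConvexOn.sub hg (uniformConcaveOn_zero.2 hlin)
  have hcauchy : ⟪r, A u - A w⟫ ≤ ‖r‖ * (‖A‖ * ‖w - u‖) := by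
    refine (real_inner_le_norm _ _).trans ?_
    gcongr
    rw [← map_sub, norm_sub_rev w u]
    exact A.le_opNorm _
  have hyoung : η * ⟪r, A u - A w⟫ ≤ η / 4 * ‖r‖ ^ 2 + μ / 2 * ‖w - u‖ ^ 2 := calc
    η * ⟪r, A u - A w⟫ ≤ η * (‖r‖ * (‖A‖ * ‖w - u‖)) := by gcongr
    _ ≤ η * (‖r‖ ^ 2 / 4 + (‖A‖ * ‖w - u‖) ^ 2) := by
      gcongr
      linarith [sq_nonneg (‖r‖ / 2 - ‖A‖ * ‖w - u‖)]
    _ = η / 4 * ‖r‖ ^ 2 + 2 * η * ‖A‖ ^ 2 / 2 * ‖w - u‖ ^ 2 := by ring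
    _ ≤ η / 4 * ‖r‖ ^ 2 + μ / 2 * ‖w - u‖ ^ 2 := by gcongr
  simp only [inner_sub_left, inner_sub_right, real_inner_smul_left] at hyoung ⊢
  linarith

lemma sub_inner_le_of_isMinOn_add_sq {h : F → ℝ} {s : Set F} {η : ℝ} {B : F →ₗ[ℝ] G} {a l : G}
    {v w : F} (hh : ConvexOn ℝ s h)
    (hmin : IsMinOn (fun v => h v - ⟪l, B v⟫ + η / 2 * ‖a + B v‖ ^ 2) s v)
    (hv : v ∈ s) (hw : w ∈ s) :
    h v - ⟪l - η • (a + B v), B v⟫ ≤ h w - ⟪l - η • (a + B v), B w⟫ := by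
  have hgrowth : h v - ⟪l, B v⟫ + η / 2 * ‖a + B v‖ ^ 2 + η / 2 * ‖B w - B v‖ ^ 2
      ≤ h w - ⟪l, B w⟫ + η / 2 * ‖a + B w‖ ^ 2 := by
    refine add_le_of_isMinOn_of_segment_le (φ := fun v => h v - ⟪l, B v⟫ + η / 2 * ‖a + B v‖ ^ 2)
      hh.1 hv hw hmin fun t ht0 ht1 => ?_
    have hconv := hh.2 hw hv ht0.le (sub_nonneg.2 ht1.le) (by ring)
    have hseg : a + B (t • w + (1 - t) • v) = t • (a + B w) + (1 - t) • (a + B v) := by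
      simp only [map_add, map_smul]
      module
    have hdiff : B w - B v = (a + B w) - (a + B v) := by abel
    rw [hseg, hdiff, norm_add_sq_real, norm_sub_sq_real]
    simp only [map_add, map_smul, inner_add_right, real_inner_smul_left, real_inner_smul_right,
      norm_smul, mul_pow, Real.norm_eq_abs, sq_abs, smul_eq_mul] at hconv ⊢
    linarith
  have hsq : ‖a + B w‖ ^ 2
      = ‖a + B v‖ ^ 2 + 2 * ⟪a + B v, B w - B v⟫ + ‖B w - B v‖ ^ 2 := by
    rw [← norm_add_sq_real, add_add_sub_cancel]
  rw [hsq] at hgrowth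
  simp only [inner_sub_left, inner_sub_right, real_inner_smul_left] at hgrowth ⊢
  linarith

-- The two conditions on the parameters are exactly what makes the cross terms cancel and leaves at
-- most `η * (3 + τ ^ 2) / 4` in front of `‖s‖ ^ 2`.
lemma norm_sq_combo_div_le {η τ β β' : ℝ} (hη : 0 ≤ η) (hτ1 : τ < 1) (hβ : 0 < β)
    (hβ' : (1 - τ) * β ≤ β') (hτβ : τ ^ 2 ≤ η * (1 - τ ^ 2) * β) (r s : G) :
    ‖(1 - τ) • r + τ • s‖ ^ 2 / (2 * β')
      ≤ (1 - τ) * (‖r‖ ^ 2 / (2 * β)) + τ * (β⁻¹ * ⟪r, s⟫) + η * (3 + τ ^ 2) / 4 * ‖s‖ ^ 2 := by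
  have hτ : 0 < 1 - τ := sub_pos.2 hτ1
  have hcoef : τ ^ 2 / (2 * ((1 - τ) * β)) ≤ η * (3 + τ ^ 2) / 4 := by
    rw [div_le_iff₀ (by positivity)]
    have : 0 ≤ η * (1 - τ) ^ 2 * ((1 - τ) * β) := by positivity
    linarith
  calc ‖(1 - τ) • r + τ • s‖ ^ 2 / (2 * β')
      ≤ ‖(1 - τ) • r + τ • s‖ ^ 2 / (2 * ((1 - τ) * β)) := by gcongr
    _ = (1 - τ) * (‖r‖ ^ 2 / (2 * β)) + τ * (β⁻¹ * ⟪r, s⟫)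
        + τ ^ 2 / (2 * ((1 - τ) * β)) * ‖s‖ ^ 2 := by
      rw [norm_add_sq_real, norm_smul, norm_smul, real_inner_smul_left, real_inner_smul_right,
        mul_pow, mul_pow, Real.norm_eq_abs, Real.norm_eq_abs, sq_abs, sq_abs]
      field_simp
    _ ≤ _ := by gcongr

end

/-- The two-block problem of minimizing `g u + h v` subject to `A u + B v = c`. The extended-valued
functions `g` and `h` are encoded by their values on their effective domains `domg` and `domh`. -/
structure TwoBlockProblem (E F G : Type*) [NormedAddCommGroup E] [NormedSpace ℝ E]
    [AddCommGroup F] [Module ℝ F] [NormedAddCommGroup G] [InnerProductSpace ℝ G] where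
  g : E → ℝ
  domg : Set E
  h : F → ℝ
  domh : Set F
  A : E →L[ℝ] G
  B : F →ₗ[ℝ] G
  c : G

namespace TwoBlockProblem

variable {E F G : Type*} [NormedAddCommGroup E] [NormedSpace ℝ E] [AddCommGroup F] [Module ℝ F]
  [NormedAddCommGroup G] [InnerProductSpace ℝ G] (P : TwoBlockProblem E F G)

/-- The effective domain of the objective. -/
def dom : Set (E × F) := P.domg ×ˢ P.domh

/-- The objective `f (u, v) = g u + h v`. -/
def objective (x : E × F) : ℝ := P.g x.1 + P.h x.2

/-- The residual of the linear constraint, whose norm is the feasibility gap. -/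
def residual (x : E × F) : G := P.A x.1 + P.B x.2 - P.c

/-- The Lagrangian, with the sign convention for which the dual function of the problem is
`d l = -inf P.lagrangian l`. -/
def lagrangian (l : G) (x : E × F) : ℝ := P.objective x - ⟪l, P.residual x⟫

/-- A Karush-Kuhn-Tucker point `(x, l)`, in its saddle point form: `x` is feasible and minimizes
the Lagrangian with multiplier `l`. -/
structure IsKKTPoint (x : E × F) (l : G) : Prop where
  mem : x ∈ P.dom
  residual_eq_zero : P.residual x = 0
  isMinOn : IsMinOn (P.lagrangian l) P.dom x

/-- One step of the alternating minimization algorithm with step size `η` from the multiplier `l`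
to `l'`: `x.1` minimizes the Lagrangian, `x.2` the augmented Lagrangian at `x.1`. -/
structure IsAMAStep (η : ℝ) (l : G) (x : E × F) (l' : G) : Prop where
  mem : x ∈ P.dom
  isMinOn_fst : IsMinOn (fun u => P.g u - ⟪l, P.A u⟫) P.domg x.1
  isMinOn_snd :
    IsMinOn (fun v => P.h v - ⟪l, P.B v⟫ + η / 2 * ‖P.A x.1 + P.B v - P.c‖ ^ 2) P.domh x.2
  multiplier_eq : l' = l - η • P.residual x

/-- The smoothed gap `f(x) + d(l) + ‖r(x)‖² / (2β)` is at most `ε`. The dual value `d(l)` is spelled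
out as the supremum of `-P.lagrangian l`, so that it need not be finite a priori. -/
def SmoothedGapLE (β : ℝ) (x : E × F) (l : G) (ε : ℝ) : Prop :=
  ∀ y ∈ P.dom, P.objective x + ‖P.residual x‖ ^ 2 / (2 * β) ≤ P.lagrangian l y + ε

/-- The sequences `xb = x̄`, `xh = x̂`, `lb = λ̄`, `ls = λ*`, `lh = λ̂` are generated from
`λ̂⁰ = 0` by the smoothing alternating minimization algorithm with step size `η`, weights `τ` and
smoothness parameters `β`. -/
structure IsSAMA (η : ℝ) (τ β : ℕ → ℝ) (xb xh : ℕ → E × F) (lb ls lh : ℕ → G) : Prop where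
  init : P.IsAMAStep η 0 (xb 1) (lb 1)
  smoothed_one : ls 1 = (β 1)⁻¹ • -P.residual (xb 1)
  extrapolated : ∀ k, 1 ≤ k → lh k = (1 - τ k) • lb k + τ k • ls k
  step : ∀ k, 1 ≤ k → P.IsAMAStep η (lh k) (xh (k + 1)) (lb (k + 1))
  smoothed_succ : ∀ k, 1 ≤ k → ls (k + 1)
    = (β (k + 1))⁻¹ • (((1 - τ k) * β k) • ls k + (τ k * η⁻¹) • (lb (k + 1) - lh k))
  averaged_succ : ∀ k, 1 ≤ k → xb (k + 1) = (1 - τ k) • xb k + τ k • xh (k + 1)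

variable {P} {μ η : ℝ}

lemma residual_combo (t : ℝ) (x y : E × F) :
    P.residual ((1 - t) • x + t • y) = (1 - t) • P.residual x + t • P.residual y := by
  simp only [residual, Prod.fst_add, Prod.snd_add, Prod.smul_fst, Prod.smul_snd, map_add, map_smul]
  module

lemma convexOn_objective (hg : ConvexOn ℝ P.domg P.g) (hh : ConvexOn ℝ P.domh P.h) :
    ConvexOn ℝ P.dom P.objective := by
  have hdom : Convex ℝ P.dom := hg.1.prod hh.1
  exact ((hg.comp_linearMap (LinearMap.fst ℝ E F)).subset (fun _ hx => hx.1) hdom).add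
    ((hh.comp_linearMap (LinearMap.snd ℝ E F)).subset (fun _ hx => hx.2) hdom)

lemma lagrangian_sub_smul (l : G) (x : E × F) :
    P.lagrangian (l - η • P.residual x) x = P.lagrangian l x + η * ‖P.residual x‖ ^ 2 := by
  simp only [lagrangian, inner_sub_left, real_inner_smul_left, real_inner_self_eq_norm_sq]
  ring

lemma lagrangian_eq_sub_add (l : G) (x : E × F) :
    P.lagrangian l x = P.g x.1 - ⟪l, P.A x.1⟫ + (P.h x.2 - ⟪l, P.B x.2⟫) + ⟪l, P.c⟫ := by
  simp only [lagrangian, objective, residual, inner_sub_right, inner_add_right]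
  ring

lemma IsKKTPoint.of_subgradients {u : E} {v : F} {l : G} (hu : u ∈ P.domg) (hv : v ∈ P.domh)
    (hfeas : P.A u + P.B v = P.c)
    (hg : ∀ w ∈ P.domg, P.g u + ⟪l, P.A (w - u)⟫ ≤ P.g w)
    (hh : ∀ w ∈ P.domh, P.h v + ⟪l, P.B (w - v)⟫ ≤ P.h w) : P.IsKKTPoint (u, v) l where
  mem := ⟨hu, hv⟩
  residual_eq_zero := sub_eq_zero.2 hfeas
  isMinOn := isMinOn_iff.2 fun y hy => by
    have hfst := hg y.1 hy.1
    have hsnd := hh y.2 hy.2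
    simp only [map_sub, inner_sub_right] at hfst hsnd
    rw [lagrangian_eq_sub_add, lagrangian_eq_sub_add]
    linarith

lemma IsKKTPoint.lagrangian_eq {x : E × F} {l : G} (hx : P.IsKKTPoint x l) (l' : G) :
    P.lagrangian l' x = P.objective x := by
  rw [lagrangian, hx.residual_eq_zero, inner_zero_right, sub_zero]

lemma IsAMAStep.lagrangian_add_le {l l' : G} {x y : E × F} (hx : P.IsAMAStep η l x l')
    (hg : StrongConvexOn P.domg μ P.g) (hh : ConvexOn ℝ P.domh P.h) (hη : 0 ≤ η)
    (hμ : 2 * η * ‖P.A‖ ^ 2 ≤ μ) (hy : y ∈ P.dom) :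
    P.lagrangian l x + 3 / 4 * η * ‖P.residual x‖ ^ 2 ≤ P.lagrangian l' y := by
  have hres (v : F) : P.A x.1 + P.B v - P.c = P.A x.1 - P.c + P.B v := by abel
  have hfst := sub_inner_le_of_isMinOn_strongConvexOn hg hη hμ hx.isMinOn_fst hx.mem.1 hy.1
    (P.residual x)
  have hsnd : P.h x.2 - ⟪l', P.B x.2⟫ ≤ P.h y.2 - ⟪l', P.B y.2⟫ := by
    have hmin := hx.isMinOn_snd
    simp only [hres] at hmin
    rw [hx.multiplier_eq, residual, hres]
    exact sub_inner_le_of_isMinOn_add_sq hh hmin hx.mem.2 hy.2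
  have hshift := lagrangian_sub_smul (P := P) (η := η) l x
  rw [← hx.multiplier_eq] at hfst hshift
  rw [lagrangian_eq_sub_add l'] at hshift ⊢
  linarith

lemma SmoothedGapLE.mono {β ε ε' : ℝ} {x : E × F} {l : G} (h : P.SmoothedGapLE β x l ε)
    (hε : ε ≤ ε') : P.SmoothedGapLE β x l ε' :=
  fun y hy => (h y hy).trans (by gcongr)

lemma IsAMAStep.smoothedGapLE {β : ℝ} {l' : G} {x : E × F} (hx : P.IsAMAStep η 0 x l')
    (hg : StrongConvexOn P.domg μ P.g) (hh : ConvexOn ℝ P.domh P.h) (hη : 0 ≤ η)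
    (hμ : 2 * η * ‖P.A‖ ^ 2 ≤ μ) (hβ : 0 < β) (hηβ : 1 ≤ 2 * η * β) :
    P.SmoothedGapLE β x l' (η / 4 * ‖P.residual x‖ ^ 2) := by
  intro y hy
  have hstep := hx.lagrangian_add_le hg hh hη hμ hy
  rw [lagrangian, inner_zero_left] at hstep
  have hsq : ‖P.residual x‖ ^ 2 / (2 * β) ≤ η * ‖P.residual x‖ ^ 2 := by
    rw [div_le_iff₀ (by positivity)]
    linarith [mul_le_mul_of_nonneg_right hηβ (sq_nonneg ‖P.residual x‖)]
  linarith

lemma SmoothedGapLE.step {τ β β' ε : ℝ} {x x' : E × F} {l l' lh : G}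
    (hgap : P.SmoothedGapLE β x l ε) (hx : x ∈ P.dom) (hx' : P.IsAMAStep η lh x' l')
    (hlh : lh = (1 - τ) • l + τ • -(β⁻¹ • P.residual x))
    (hg : StrongConvexOn P.domg μ P.g) (hh : ConvexOn ℝ P.domh P.h)
    (hη : 0 ≤ η) (hμ : 2 * η * ‖P.A‖ ^ 2 ≤ μ)
    (hτ0 : 0 ≤ τ) (hτ1 : τ < 1) (hβ : 0 < β) (hβ' : (1 - τ) * β ≤ β')
    (hτβ : τ ^ 2 ≤ η * (1 - τ ^ 2) * β) :
    P.SmoothedGapLE β' ((1 - τ) • x + τ • x') l'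
      ((1 - τ) * ε + η * τ ^ 2 / 4 * ‖P.residual x'‖ ^ 2) := by
  intro y hy
  have hτ : 0 ≤ 1 - τ := sub_nonneg.2 hτ1.le
  have hμ0 : 0 ≤ μ := le_trans (by positivity) hμ
  have hf : ConvexOn ℝ P.dom P.objective :=
    convexOn_objective (hg.convexOn fun r => by positivity) hh
  have hobj := hf.2 hx hx'.mem hτ hτ0 (by ring)
  have hold := mul_le_mul_of_nonneg_left (hgap x' hx'.mem) hτ
  have hnew := hx'.lagrangian_add_le hg hh hη hμ hy
  have hcross : P.lagrangian lh x' = P.objective x' - (1 - τ) * ⟪l, P.residual x'⟫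
      + τ * (β⁻¹ * ⟪P.residual x, P.residual x'⟫) := by
    simp only [lagrangian, hlh, inner_add_left, inner_neg_left, real_inner_smul_left]
    ring
  have hsq := norm_sq_combo_div_le hη hτ1 hβ hβ' hτβ (P.residual x) (P.residual x')
  rw [residual_combo]
  simp only [lagrangian, smul_eq_mul] at hobj hold hnew hcross ⊢
  linarith

section KKT

variable {β ε : ℝ} {x xs : E × F} {l ls : G}

lemma SmoothedGapLE.objective_add_le (hgap : P.SmoothedGapLE β x l ε) (hs : P.IsKKTPoint xs ls) :
    P.objective x + ‖P.residual x‖ ^ 2 / (2 * β) ≤ P.objective xs + ε := by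
  simpa only [hs.lagrangian_eq] using hgap xs hs.mem

lemma SmoothedGapLE.objective_sub_le (hgap : P.SmoothedGapLE β x l ε) (hs : P.IsKKTPoint xs ls)
    (hβ : 0 ≤ β) : P.objective x - P.objective xs ≤ ε := by
  have : 0 ≤ ‖P.residual x‖ ^ 2 / (2 * β) := by positivity
  linarith [hgap.objective_add_le hs]

lemma SmoothedGapLE.norm_residual_le (hgap : P.SmoothedGapLE β x l ε) (hs : P.IsKKTPoint xs ls)
    (hx : x ∈ P.dom) (hβ : 0 < β) :
    ‖P.residual x‖ ≤ 2 * β * ‖ls‖ + √(2 * β * ε) := by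
  have hsaddle : P.objective xs ≤ P.objective x - ⟪ls, P.residual x⟫ :=
    (hs.lagrangian_eq ls).symm.trans_le (hs.isMinOn hx)
  have hcauchy := neg_le_of_abs_le (abs_real_inner_le_norm ls (P.residual x))
  have hsq : ‖P.residual x‖ ^ 2 / (2 * β) ≤ ‖ls‖ * ‖P.residual x‖ + ε := by
    linarith [hgap.objective_add_le hs]
  rw [div_le_iff₀ (by positivity)] at hsq
  exact le_mul_add_sqrt_of_sq_le (by positivity) (by linarith)

end KKT

namespace IsSAMA

variable {τ β : ℕ → ℝ} {xb xh : ℕ → E × F} {lb ls lh : ℕ → G}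

lemma mem_dom (hS : P.IsSAMA η τ β xb xh lb ls lh) (hdom : Convex ℝ P.dom)
    (hτ0 : ∀ k, 0 ≤ τ k) (hτ1 : ∀ k, τ k ≤ 1) {k : ℕ} (hk : 1 ≤ k) : xb k ∈ P.dom := by
  induction k, hk using Nat.le_induction with
  | base => exact hS.init.mem
  | succ k hk ih =>
    rw [hS.averaged_succ k hk]
    exact hdom ih (hS.step k hk).mem (sub_nonneg.2 (hτ1 k)) (hτ0 k) (by ring)

lemma smoothed_eq (hS : P.IsSAMA η τ β xb xh lb ls lh) (hη : η ≠ 0) (hβ : ∀ k, β k ≠ 0)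
    {k : ℕ} (hk : 1 ≤ k) : ls k = -((β k)⁻¹ • P.residual (xb k)) := by
  induction k, hk using Nat.le_induction with
  | base => rw [hS.smoothed_one, smul_neg]
  | succ k hk ih =>
    have hold : ((1 - τ k) * β k) • ls k = -((1 - τ k) • P.residual (xb k)) := by
      rw [ih, smul_neg, smul_smul, mul_assoc, mul_inv_cancel₀ (hβ k), mul_one]
    have hnew : (τ k * η⁻¹) • (lb (k + 1) - lh k) = -(τ k • P.residual (xh (k + 1))) := by
      rw [(hS.step k hk).multiplier_eq, sub_sub_cancel_left, smul_neg, smul_smul, mul_assoc,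
        inv_mul_cancel₀ hη, mul_one]
    rw [hS.smoothed_succ k hk, hS.averaged_succ k hk, residual_combo, hold, hnew, ← neg_add,
      smul_neg]

theorem smoothedGapLE (hS : P.IsSAMA η τ β xb xh lb ls lh)
    (hg : StrongConvexOn P.domg μ P.g) (hh : ConvexOn ℝ P.domh P.h)
    (hη : 0 < η) (hμ : 2 * η * ‖P.A‖ ^ 2 ≤ μ)
    (hτ0 : ∀ k, 0 ≤ τ k) (hτ1 : ∀ k, τ k < 1) (hβ : ∀ k, 0 < β k)
    (hβ_one : 1 ≤ 2 * η * β 1) (hβ_succ : ∀ k, (1 - τ k) * β k ≤ β (k + 1))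
    (hτβ : ∀ k, τ k ^ 2 ≤ η * (1 - τ k ^ 2) * β k)
    {D : ℝ} (hD : ∀ x ∈ P.dom, ‖P.residual x‖ ≤ D)
    {ε : ℕ → ℝ} (hε_one : η / 4 * D ^ 2 ≤ ε 1)
    (hε_succ : ∀ k, (1 - τ k) * ε k + η * τ k ^ 2 / 4 * D ^ 2 ≤ ε (k + 1))
    {k : ℕ} (hk : 1 ≤ k) : P.SmoothedGapLE (β k) (xb k) (lb k) (ε k) := by
  induction k, hk using Nat.le_induction with
  | base =>
    refine (hS.init.smoothedGapLE hg hh hη.le hμ (hβ 1) hβ_one).mono (le_trans ?_ hε_one)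
    gcongr
    exact hD _ hS.init.mem
  | succ k hk ih =>
    have hlh := hS.extrapolated k hk
    rw [hS.smoothed_eq hη.ne' (fun k => (hβ k).ne') hk] at hlh
    rw [hS.averaged_succ k hk]
    have hmem := hS.mem_dom (hg.1.prod hh.1) hτ0 (fun k => (hτ1 k).le) hk
    have hgap := ih.step hmem (hS.step k hk) hlh hg hh hη.le hμ (hτ0 k) (hτ1 k) (hβ k)
      (hβ_succ k) (hτβ k)
    refine hgap.mono (le_trans ?_ (hε_succ k))
    gcongr
    exact hD _ (hS.step k hk).mem

-- `β` solves `τ k ^ 2 = η * (1 - τ k ^ 2) * β k`, the equality case in `smoothedGapLE`.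
theorem smoothedGapLE_three_div
    (hS : P.IsSAMA η (fun k => 3 / ((k : ℝ) + 4))
      (fun k => 9 / (η * ((k : ℝ) + 1) * ((k : ℝ) + 7))) xb xh lb ls lh)
    (hg : StrongConvexOn P.domg μ P.g) (hh : ConvexOn ℝ P.domh P.h)
    (hη : 0 < η) (hμ : 2 * η * ‖P.A‖ ^ 2 ≤ μ)
    {D : ℝ} (hD : ∀ x ∈ P.dom, ‖P.residual x‖ ≤ D) {k : ℕ} (hk : 1 ≤ k) :
    P.SmoothedGapLE (9 / (η * ((k : ℝ) + 1) * ((k : ℝ) + 7))) (xb k) (lb k)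
      (9 * η * D ^ 2 / (8 * ((k : ℝ) + 3))) := by
  refine hS.smoothedGapLE (ε := fun k => 9 * η * D ^ 2 / (8 * ((k : ℝ) + 3))) hg hh hη hμ
    (fun k => by positivity) (fun k => three_div_add_four_lt_one k.cast_nonneg)
    (fun k => by positivity) ?_ (fun k => ?_) (fun k => ?_) hD ?_ (fun k => ?_) hk
  · field_simp
    norm_num
  · push_cast
    exact one_sub_three_div_mul_le hη k.cast_nonneg
  · apply le_of_eq
    field_simp
    ring
  · push_cast
    nlinarith [mul_nonneg hη.le (sq_nonneg D)]
  · push_cast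
    exact one_sub_three_div_mul_add_le hη.le k.cast_nonneg D

theorem norm_residual_le_three_div
    (hS : P.IsSAMA η (fun k => 3 / ((k : ℝ) + 4))
      (fun k => 9 / (η * ((k : ℝ) + 1) * ((k : ℝ) + 7))) xb xh lb ls lh)
    (hg : StrongConvexOn P.domg μ P.g) (hh : ConvexOn ℝ P.domh P.h)
    (hη : 0 < η) (hμ : 2 * η * ‖P.A‖ ^ 2 ≤ μ)
    {xs : E × F} {l : G} (hs : P.IsKKTPoint xs l)
    {D : ℝ} (hD : ∀ x ∈ P.dom, ‖P.residual x‖ ≤ D) {k : ℕ} (hk : 1 ≤ k) :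
    ‖P.residual (xb k)‖ ≤ 2 * (9 / (η * ((k : ℝ) + 1) * ((k : ℝ) + 7))) * ‖l‖
      + 9 * D / (2 * √(((k : ℝ) + 1) * ((k : ℝ) + 3) * ((k : ℝ) + 7))) := by
  have hmem : xb k ∈ P.dom := hS.mem_dom (hg.1.prod hh.1) (fun k => by positivity)
    (fun k => (three_div_add_four_lt_one k.cast_nonneg).le) hk
  have hD0 : 0 ≤ D := (norm_nonneg _).trans (hD _ hmem)
  have hsqrt : √(2 * (9 / (η * ((k : ℝ) + 1) * ((k : ℝ) + 7)))
        * (9 * η * D ^ 2 / (8 * ((k : ℝ) + 3))))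
      = 9 * D / (2 * √(((k : ℝ) + 1) * ((k : ℝ) + 3) * ((k : ℝ) + 7))) := by
    rw [Real.sqrt_eq_iff_eq_sq (by positivity) (by positivity), div_pow, mul_pow 2,
      Real.sq_sqrt (by positivity)]
    field_simp
    ring
  rw [← hsqrt]
  exact (hS.smoothedGapLE_three_div hg hh hη hμ hD hk).norm_residual_le hs hmem (by positivity)

end IsSAMA

end TwoBlockProblem

theorem stmt_11_general {E F G : Type*} [NormedAddCommGroup E] [NormedSpace ℝ E]
    [AddCommGroup F] [Module ℝ F] [NormedAddCommGroup G] [InnerProductSpace ℝ G]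
    (P : TwoBlockProblem E F G) {μ : ℝ} (hA : 0 < ‖P.A‖) (hμ : 0 < μ)
    (hg : StrongConvexOn P.domg μ P.g) (hh : ConvexOn ℝ P.domh P.h)
    {xstar : E × F} {lstar : G} (hstar : P.IsKKTPoint xstar lstar)
    {D : ℝ} (hD : ∀ x ∈ P.dom, ‖P.residual x‖ ≤ D)
    {xb xh : ℕ → E × F} {lb ls lh : ℕ → G}
    (hS : P.IsSAMA (μ / (2 * ‖P.A‖ ^ 2)) (fun k => 3 / ((k : ℝ) + 4))
      (fun k => 18 * ‖P.A‖ ^ 2 / (μ * ((k : ℝ) + 1) * ((k : ℝ) + 7))) xb xh lb ls lh)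
    {k : ℕ} (hk : 1 ≤ k) :
    P.objective (xb k) - P.objective xstar
        ≤ 9 * μ * D ^ 2 / (16 * ‖P.A‖ ^ 2 * ((k : ℝ) + 3)) ∧
      ‖P.residual (xb k)‖ ≤ 36 * ‖P.A‖ ^ 2 * ‖lstar‖ / (μ * ((k : ℝ) + 1) * ((k : ℝ) + 7))
        + 9 * D / (2 * √(((k : ℝ) + 1) * ((k : ℝ) + 3) * ((k : ℝ) + 7))) := by
  set η := μ / (2 * ‖P.A‖ ^ 2) with hη_def
  have hη : 0 < η := by positivity
  have hμη : 2 * η * ‖P.A‖ ^ 2 = μ := by rw [hη_def]; field_simp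
  have hβ (k : ℕ) : 18 * ‖P.A‖ ^ 2 / (μ * ((k : ℝ) + 1) * ((k : ℝ) + 7))
      = 9 / (η * ((k : ℝ) + 1) * ((k : ℝ) + 7)) := by
    rw [← hμη]
    field_simp
    norm_num
  simp only [hβ] at hS
  constructor
  · calc P.objective (xb k) - P.objective xstar
        ≤ 9 * η * D ^ 2 / (8 * ((k : ℝ) + 3)) :=
          (hS.smoothedGapLE_three_div hg hh hη hμη.le hD hk).objective_sub_le hstar
            (by positivity)
      _ = 9 * μ * D ^ 2 / (16 * ‖P.A‖ ^ 2 * ((k : ℝ) + 3)) := by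
        rw [← hμη]
        field_simp
        ring
  · have hlin : 36 * ‖P.A‖ ^ 2 * ‖lstar‖ / (μ * ((k : ℝ) + 1) * ((k : ℝ) + 7))
        = 2 * (9 / (η * ((k : ℝ) + 1) * ((k : ℝ) + 7))) * ‖lstar‖ := by
      rw [← hβ]
      ring
    rw [hlin]
    exact hS.norm_residual_le_three_div hg hh hη hμη.le hstar hD hk

theorem stmt_11 {p₁ p₂ n : ℕ}
    (g : EuclideanSpace ℝ (Fin p₁) → ℝ) (domg : Set (EuclideanSpace ℝ (Fin p₁)))
    (h : EuclideanSpace ℝ (Fin p₂) → ℝ) (domh : Set (EuclideanSpace ℝ (Fin p₂)))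
    (A : EuclideanSpace ℝ (Fin p₁) →L[ℝ] EuclideanSpace ℝ (Fin n))
    (B : EuclideanSpace ℝ (Fin p₂) →L[ℝ] EuclideanSpace ℝ (Fin n))
    (c : EuclideanSpace ℝ (Fin n))
    (hgconv : ConvexOn ℝ domg g) (hglsc : LowerSemicontinuousOn g domg)
    (hgne : domg.Nonempty)
    (hhconv : ConvexOn ℝ domh h) (hhlsc : LowerSemicontinuousOn h domh)
    (hhne : domh.Nonempty)
    (gstar : EuclideanSpace ℝ (Fin p₁) → ℝ) (hstar : EuclideanSpace ℝ (Fin p₂) → ℝ)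
    (hgstar : ∀ z, IsLUB ((fun u => ⟪z, u⟫ - g u) '' domg) (gstar z))
    (hhstar : ∀ z, IsLUB ((fun v => ⟪z, v⟫ - h v) '' domh) (hstar z))
    (d : EuclideanSpace ℝ (Fin n) → ℝ)
    (hd : ∀ lam, d lam = gstar ((ContinuousLinearMap.adjoint A) lam) + hstar ((ContinuousLinearMap.adjoint B) lam) - ⟪c, lam⟫)
    (ustar : EuclideanSpace ℝ (Fin p₁)) (vstar : EuclideanSpace ℝ (Fin p₂)) (lamstar : EuclideanSpace ℝ (Fin n))
    (hustar : ustar ∈ domg) (hvstar : vstar ∈ domh)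
    (hkkt0 : A ustar + B vstar = c)
    (hkktg : ∀ u ∈ domg, g ustar + ⟪(ContinuousLinearMap.adjoint A) lamstar, u - ustar⟫ ≤ g u)
    (hkkth : ∀ v ∈ domh, h vstar + ⟪(ContinuousLinearMap.adjoint B) lamstar, v - vstar⟫ ≤ h v)
    (hA : 0 < ‖A‖)
    (μg : ℝ) (hμg : 0 < μg) (hgsc : StrongConvexOn domg μg g)
    (fstar : ℝ)
    (hfs : fstar = g ustar + h vstar)
    (hfd : fstar = -(d lamstar))
    (Df : ℝ)
    (hDf : IsLUB {r : ℝ | ∃ u ∈ domg, ∃ v ∈ domh, r = ‖A u + B v - c‖} Df)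
    (ub : ℕ → EuclideanSpace ℝ (Fin p₁)) (vb : ℕ → EuclideanSpace ℝ (Fin p₂)) (lb ls lh : ℕ → EuclideanSpace ℝ (Fin n))
    (uh : ℕ → EuclideanSpace ℝ (Fin p₁)) (vh : ℕ → EuclideanSpace ℝ (Fin p₂))
    (hub1 : ub 1 ∈ domg ∧ ∀ u ∈ domg,
      g (ub 1) - ⟪(ContinuousLinearMap.adjoint A) 0, ub 1⟫ ≤ g u - ⟪(ContinuousLinearMap.adjoint A) 0, u⟫)
    (hvb1 : vb 1 ∈ domh ∧ ∀ v ∈ domh,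
      h (vb 1) - ⟪(ContinuousLinearMap.adjoint B) 0, vb 1⟫ + (μg/(2*‖A‖^2))/2 * ‖A (ub 1) + B (vb 1) - c‖^2
        ≤ h v - ⟪(ContinuousLinearMap.adjoint B) 0, v⟫ + (μg/(2*‖A‖^2))/2 * ‖A (ub 1) + B v - c‖^2)
    (hlb1 : lb 1 = (0 : EuclideanSpace ℝ (Fin n)) - (μg/(2*‖A‖^2)) • (A (ub 1) + B (vb 1) - c))
    (hls1 : ls 1 = (18*‖A‖^2/(μg*2*8))⁻¹ • (c - A (ub 1) - B (vb 1)))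
    (hlh : ∀ k : ℕ, 1 ≤ k →
      lh k = (1 - 3/((k:ℝ)+4)) • lb k + (3/((k:ℝ)+4)) • ls k)
    (huh : ∀ k : ℕ, 1 ≤ k → uh (k+1) ∈ domg ∧ ∀ u ∈ domg,
      g (uh (k+1)) - ⟪(ContinuousLinearMap.adjoint A) (lh k), uh (k+1)⟫ ≤ g u - ⟪(ContinuousLinearMap.adjoint A) (lh k), u⟫)
    (hvh : ∀ k : ℕ, 1 ≤ k → vh (k+1) ∈ domh ∧ ∀ v ∈ domh,
      h (vh (k+1)) - ⟪(ContinuousLinearMap.adjoint B) (lh k), vh (k+1)⟫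
          + (μg/(2*‖A‖^2))/2 * ‖A (uh (k+1)) + B (vh (k+1)) - c‖^2
        ≤ h v - ⟪(ContinuousLinearMap.adjoint B) (lh k), v⟫ + (μg/(2*‖A‖^2))/2 * ‖A (uh (k+1)) + B v - c‖^2)
    (hlbk : ∀ k : ℕ, 1 ≤ k →
      lb (k+1) = lh k - (μg/(2*‖A‖^2)) • (A (uh (k+1)) + B (vh (k+1)) - c))
    (hlsk : ∀ k : ℕ, 1 ≤ k →
      ls (k+1) = (18*‖A‖^2/(μg*((k:ℝ)+2)*((k:ℝ)+8)))⁻¹ •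
        (((1 - 3/((k:ℝ)+4)) * (18*‖A‖^2/(μg*((k:ℝ)+1)*((k:ℝ)+7)))) • ls k
          + ((3/((k:ℝ)+4)) * (μg/(2*‖A‖^2))⁻¹) • (lb (k+1) - lh k)))
    (hubk : ∀ k : ℕ, 1 ≤ k →
      ub (k+1) = (1 - 3/((k:ℝ)+4)) • ub k + (3/((k:ℝ)+4)) • uh (k+1))
    (hvbk : ∀ k : ℕ, 1 ≤ k →
      vb (k+1) = (1 - 3/((k:ℝ)+4)) • vb k + (3/((k:ℝ)+4)) • vh (k+1)) :
    ∀ k : ℕ, 1 ≤ k →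
      g (ub k) + h (vb k) - fstar ≤ 9*μg*Df^2/(16*‖A‖^2*((k:ℝ)+3)) ∧
      ‖A (ub k) + B (vb k) - c‖
        ≤ 36*‖A‖^2*‖lamstar‖/(μg*((k:ℝ)+1)*((k:ℝ)+7))
          + 9*Df/(2*Real.sqrt (((k:ℝ)+1)*((k:ℝ)+3)*((k:ℝ)+7))) := by
  simp only [ContinuousLinearMap.adjoint_inner_left] at hkktg hkkth hub1 hvb1 huh hvh
  let P : TwoBlockProblem (EuclideanSpace ℝ (Fin p₁)) (EuclideanSpace ℝ (Fin p₂))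
    (EuclideanSpace ℝ (Fin n)) := ⟨g, domg, h, domh, A, B, c⟩
  have hkkt : P.IsKKTPoint (ustar, vstar) lamstar :=
    .of_subgradients hustar hvstar hkkt0 hkktg hkkth
  have hD : ∀ x ∈ P.dom, ‖P.residual x‖ ≤ Df :=
    fun x hx => hDf.1 ⟨x.1, hx.1, x.2, hx.2, rfl⟩
  have hS : P.IsSAMA (μg / (2 * ‖A‖ ^ 2)) (fun k => 3 / ((k : ℝ) + 4))
      (fun k => 18 * ‖A‖ ^ 2 / (μg * ((k : ℝ) + 1) * ((k : ℝ) + 7)))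
      (fun k => (ub k, vb k)) (fun k => (uh k, vh k)) lb ls lh :=
    { init := ⟨⟨hub1.1, hvb1.1⟩, hub1.2, hvb1.2, hlb1⟩
      smoothed_one := by
        have hres : c - A (ub 1) - B (vb 1) = -P.residual (ub 1, vb 1) :=
          (sub_sub _ _ _).trans (neg_sub _ _).symm
        rw [hls1, hres]
        norm_num
      extrapolated := hlh
      step := fun k hk => ⟨⟨(huh k hk).1, (hvh k hk).1⟩, (huh k hk).2, (hvh k hk).2, hlbk k hk⟩
      smoothed_succ := fun k hk => by
        rw [hlsk k hk]
        norm_num [add_assoc]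
      averaged_succ := fun k hk => Prod.ext (hubk k hk) (hvbk k hk) }
  rw [hfs]
  exact fun k hk => stmt_11_general P hA hμg hgsc hhconv hkkt hD hS hk
end
end

section
/- Suppose g is in addition μ_g-strongly convex with μ_g > 0, ‖A‖ > 0, and (u⋆, v⋆, λ⋆) is a KKT point with f⋆ = f(u⋆,v⋆) = −d(λ⋆). Run the strongly convex SAMA variant with λ̂⁰ := 0 and the alternative update rules τ_k := 3/(k+4), η_k := μ_gτ_k/‖A‖², β_k := 2‖A‖²/(μ_g(k+1)) for k ≥ 1 (iterates: λ̂ᵏ := (1−τ_k)λ̄ᵏ + τ_kλ*_k with λ*_k updated by λ*_{k+1} := β_{k+1}⁻¹[(1−τ_k)β_kλ*_k + τ_kη_k⁻¹(λ̄ᵏ⁺¹ − λ̂ᵏ)]; ûᵏ⁺¹ := argmin_u { g(u) − ⟨Aᵀλ̂ᵏ, u⟩ }; v̂ᵏ⁺¹ := argmin_v { h(v) − ⟨Bᵀλ̂ᵏ, v⟩ + (η_k/2)‖Aûᵏ⁺¹ + Bv − c‖² }; λ̄ᵏ⁺¹ := λ̂ᵏ − η_k(Aûᵏ⁺¹ +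 Bv̂ᵏ⁺¹ − c); (ūᵏ⁺¹,v̄ᵏ⁺¹) := (1−τ_k)(ūᵏ,v̄ᵏ) + τ_k(ûᵏ⁺¹,v̂ᵏ⁺¹)). Then for every k ≥ 1: f(x̄ᵏ) − f⋆ ≤ 27μ_gD_f²/(4‖A‖²(k+3)²) and ‖Aūᵏ + Bv̄ᵏ − c‖ ≤ 4‖A‖²‖λ⋆‖/(μ_g(k+1)) + (3√3/(k+3))·D_f/√(k+1), where x̄ᵏ = (ūᵏ, v̄ᵏ). -/
open scoped RealInnerProductSpace

noncomputable section

/-!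
The scheme is an accelerated forward-backward method on the dual, combined with primal averaging.
Write `f x = g u + h v` and `r x = A u + B v - c` for `x = (u, v)`, let `𝓛 x lam = f x - ⟪lam, r x⟫`
be the Lagrangian and put `L = ‖A‖² / μ`. Strong convexity of `g` makes the `g`-part of the dual
function `L`-smooth, so one alternating minimization step from `lam` to `lam'` through the candidate
`y` satisfies `𝓛 y lam + η (1 - L η / 2) ‖r y‖² ≤ 𝓛 x lam'` for every `x`.

Along the scheme the smoothing center is `-β⁻¹ r x̄`. Combining the step inequality with convexity
and completing the square in `r x̄'`, the smoothed gap `G x = f x̄ - 𝓛 x λ̄ + ‖r x̄‖² / (2 β)` obeys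
`G' x ≤ (1 - τ) G y + (τ² / (2 (1 - τ) β) - η (1 - L η / 2)) ‖r y‖²` as soon as `(1 - τ) β ≤ β'`.
For the parameters at hand this gives `G ≤ 27 D² / (4 L (k + 3)²)` by induction. At a KKT pair the
gap dominates `f x̄ - f x⋆`, while `f x̄ - f x⋆ ≥ -‖λ⋆‖ ‖r x̄‖` turns it into a quadratic inequality
for `‖r x̄‖`.
-/

section Inequalities

lemma nonneg_of_forall_add_mul_nonneg {a b : ℝ}
    (hab : ∀ t ∈ Set.Ioo (0 : ℝ) 1, 0 ≤ a + t * b) : 0 ≤ a := by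
  have hlim : Filter.Tendsto (fun t : ℝ => a + t * b) (nhdsWithin 0 (Set.Ioi 0)) (nhds a) := by
    have hcont : Continuous fun t : ℝ => a + t * b := by fun_prop
    simpa using (hcont.tendsto 0).mono_left nhdsWithin_le_nhds
  exact ge_of_tendsto hlim (Filter.mem_of_superset (Ioo_mem_nhdsGT one_pos) hab)

lemma add_modulus_le_of_isMinOn_sub_linear {E : Type*} [NormedAddCommGroup E] [NormedSpace ℝ E]
    {s : Set E} {f : E → ℝ} {φ : ℝ → ℝ} (hf : UniformConvexOn s φ f) (l : E →ₗ[ℝ] ℝ) {x y : E}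
    (hx : x ∈ s) (hmin : IsMinOn (fun z => f z - l z) s x) (hy : y ∈ s) :
    f x + l (y - x) + φ ‖x - y‖ ≤ f y := by
  suffices 0 ≤ f y - f x - l (y - x) - φ ‖x - y‖ by linarith
  refine nonneg_of_forall_add_mul_nonneg (b := φ ‖x - y‖) fun t ⟨ht0, ht1⟩ => ?_
  have hseg := hf.2 hx hy (sub_nonneg.2 ht1.le) ht0.le (sub_add_cancel 1 t)
  have hle := isMinOn_iff.1 hmin _
    (hf.1 hx hy (sub_nonneg.2 ht1.le) ht0.le (sub_add_cancel 1 t))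
  simp only [map_add, map_sub, map_smul, smul_eq_mul] at hseg hle ⊢
  refine nonneg_of_mul_nonneg_right ?_ ht0
  linarith

lemma subgradient_of_isMinOn_add_sq_norm {F H : Type*} [AddCommGroup F] [Module ℝ F]
    [NormedAddCommGroup H] [InnerProductSpace ℝ H] {s : Set F} {f : F → ℝ} (hf : ConvexOn ℝ s f)
    (B : F →ₗ[ℝ] H) (a c lam : H) (η : ℝ) {x y : F} (hx : x ∈ s)
    (hmin : IsMinOn (fun z => f z - ⟪lam, B z⟫ + η / 2 * ‖a + B z - c‖ ^ 2) s x) (hy : y ∈ s) :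
    f x + ⟪lam - η • (a + B x - c), B y - B x⟫ ≤ f y := by
  suffices 0 ≤ f y - f x - ⟪lam - η • (a + B x - c), B y - B x⟫ by linarith
  refine nonneg_of_forall_add_mul_nonneg (b := η / 2 * ‖B y - B x‖ ^ 2) fun t ⟨ht0, ht1⟩ => ?_
  have hseg := hf.2 hx hy (sub_nonneg.2 ht1.le) ht0.le (sub_add_cancel 1 t)
  have hle := isMinOn_iff.1 hmin _
    (hf.1 hx hy (sub_nonneg.2 ht1.le) ht0.le (sub_add_cancel 1 t))
  have hB : B ((1 - t) • x + t • y) = B x + t • (B y - B x) := by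
    simp only [map_add, map_smul]; module
  have hres : a + (B x + t • (B y - B x)) - c = (a + B x - c) + t • (B y - B x) := by abel
  rw [hB, hres, norm_add_sq_real, norm_smul, mul_pow, Real.norm_eq_abs, sq_abs] at hle
  simp only [smul_eq_mul, inner_add_right, inner_smul_right] at hseg hle
  rw [inner_sub_left, real_inner_smul_left]
  refine nonneg_of_mul_nonneg_right ?_ ht0
  linarith

lemma inner_map_le_add_sq_norm {E H : Type*} [NormedAddCommGroup E] [NormedSpace ℝ E]
    [NormedAddCommGroup H] [InnerProductSpace ℝ H] (A : E →L[ℝ] H) {μ : ℝ} (hμ : 0 < μ)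
    (y : H) (x : E) :
    ⟪y, A x⟫ ≤ ‖A‖ ^ 2 / μ / 2 * ‖y‖ ^ 2 + μ / 2 * ‖x‖ ^ 2 := by
  have hbound : ⟪y, A x⟫ ≤ ‖y‖ * (‖A‖ * ‖x‖) :=
    (real_inner_le_norm _ _).trans (by gcongr; exact A.le_opNorm x)
  have hsquare : ‖A‖ ^ 2 / μ / 2 * ‖y‖ ^ 2 + μ / 2 * ‖x‖ ^ 2 - ‖y‖ * (‖A‖ * ‖x‖)
      = (‖A‖ * ‖y‖ - μ * ‖x‖) ^ 2 / (2 * μ) := by field_simp; ring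
  have : 0 ≤ (‖A‖ * ‖y‖ - μ * ‖x‖) ^ 2 / (2 * μ) := by positivity
  linarith

lemma sq_norm_add_smul_div_le {H : Type*} [NormedAddCommGroup H] [InnerProductSpace ℝ H]
    {τ β β' : ℝ} (hτ : τ < 1) (hβ : 0 < β) (hββ' : (1 - τ) * β ≤ β') (p q : H) :
    ‖(1 - τ) • p + τ • q‖ ^ 2 / (2 * β')
      ≤ (1 - τ) * (‖p‖ ^ 2 / (2 * β)) + τ / β * ⟪p, q⟫
        + τ ^ 2 / (2 * (1 - τ) * β) * ‖q‖ ^ 2 := by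
  have hτ' : 0 < 1 - τ := sub_pos.2 hτ
  calc ‖(1 - τ) • p + τ • q‖ ^ 2 / (2 * β')
      ≤ ‖(1 - τ) • p + τ • q‖ ^ 2 / (2 * ((1 - τ) * β)) := by gcongr
    _ = (1 - τ) * (‖p‖ ^ 2 / (2 * β)) + τ / β * ⟪p, q⟫
        + τ ^ 2 / (2 * (1 - τ) * β) * ‖q‖ ^ 2 := by
      rw [norm_add_sq_real, norm_smul, norm_smul, mul_pow, mul_pow, Real.norm_eq_abs,
        Real.norm_eq_abs, sq_abs, sq_abs, real_inner_smul_left, real_inner_smul_right]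
      field_simp

lemma le_add_sqrt_of_mul_sub_le {ρ a w : ℝ} (ha : 0 ≤ a) (hρ : ρ * (ρ - a) ≤ w) : ρ ≤ a + √w := by
  by_contra! hlt
  have hpos : 0 < ρ - a := by linarith [Real.sqrt_nonneg w]
  have hw : w < (ρ - a) ^ 2 := (Real.sqrt_lt' hpos).1 (by linarith)
  nlinarith [mul_nonneg ha hpos.le]

end Inequalities

section Rates

variable {x a μ D R : ℝ}

lemma three_div_add_four_lt_one_s12 (hx : 0 ≤ x) : 3 / (x + 4) < 1 := by
  rw [div_lt_one (by positivity)]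
  linarith

lemma one_sub_three_div_add_four (hx : 0 ≤ x) : 1 - 3 / (x + 4) = (x + 1) / (x + 4) := by
  field_simp
  ring

lemma gap_rate_succ (hx : 0 ≤ x) (ha : 0 < a) (hμ : 0 < μ) (hR0 : 0 ≤ R) (hR : R ≤ D ^ 2) :
    (1 - 3 / (x + 4)) * (27 * μ * D ^ 2 / (4 * a * (x + 3) ^ 2))
      + ((3 / (x + 4)) ^ 2 / (2 * (1 - 3 / (x + 4)) * (2 * a / (μ * (x + 1))))
        - μ * (3 / (x + 4)) / a * (1 - a / μ * (μ * (3 / (x + 4)) / a) / 2)) * R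
      ≤ 27 * μ * D ^ 2 / (4 * a * (x + 4) ^ 2) := by
  have hcoeff : (3 / (x + 4)) ^ 2 / (2 * (1 - 3 / (x + 4)) * (2 * a / (μ * (x + 1))))
      - μ * (3 / (x + 4)) / a * (1 - a / μ * (μ * (3 / (x + 4)) / a) / 2)
      = 3 * μ / (4 * a * (x + 4) ^ 2) * (2 - x) := by
    rw [one_sub_three_div_add_four hx]; field_simp; ring
  -- The right-hand side is exactly what the factor `1 - 3 / (x + 4)` leaves of the target bound.
  have hslack : (2 - x) * R ≤ 9 * (x + 5) / (x + 3) ^ 2 * D ^ 2 := by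
    have : 2 - x ≤ 9 * (x + 5) / (x + 3) ^ 2 := by
      rw [le_div_iff₀ (by positivity)]
      nlinarith [pow_nonneg hx 3, sq_nonneg x]
    exact mul_le_mul this hR hR0 (by positivity)
  rw [hcoeff, one_sub_three_div_add_four hx, mul_assoc (3 * μ / _)]
  calc (x + 1) / (x + 4) * (27 * μ * D ^ 2 / (4 * a * (x + 3) ^ 2))
        + 3 * μ / (4 * a * (x + 4) ^ 2) * ((2 - x) * R)
      ≤ (x + 1) / (x + 4) * (27 * μ * D ^ 2 / (4 * a * (x + 3) ^ 2))
        + 3 * μ / (4 * a * (x + 4) ^ 2) * (9 * (x + 5) / (x + 3) ^ 2 * D ^ 2) := by gcongr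
    _ = 27 * μ * D ^ 2 / (4 * a * (x + 4) ^ 2) := by field_simp; ring

lemma gap_rate_one (ha : 0 < a) (hμ : 0 < μ) (hR0 : 0 ≤ R) (hR : R ≤ D ^ 2) :
    (1 / (2 * (2 * a / (μ * 2))) - μ * (3 / 4) / a * (1 - a / μ * (μ * (3 / 4) / a) / 2)) * R
      ≤ 27 * μ * D ^ 2 / (4 * a * (1 + 3) ^ 2) := by
  calc (1 / (2 * (2 * a / (μ * 2))) - μ * (3 / 4) / a * (1 - a / μ * (μ * (3 / 4) / a) / 2)) * R
      = μ / (64 * a) * (2 * R) := by field_simp; ring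
    _ ≤ μ / (64 * a) * (27 * D ^ 2) := by gcongr; linarith
    _ = 27 * μ * D ^ 2 / (4 * a * (1 + 3) ^ 2) := by field_simp; ring

lemma one_sub_weight_mul_smoothing_le (hx : 0 ≤ x) (ha : 0 ≤ a) (hμ : 0 < μ) :
    (1 - 3 / (x + 4)) * (2 * a / (μ * (x + 1))) ≤ 2 * a / (μ * (x + 2)) :=
  calc (1 - 3 / (x + 4)) * (2 * a / (μ * (x + 1))) = 2 * a / (μ * (x + 4)) := by
        rw [one_sub_three_div_add_four hx]; field_simp
    _ ≤ 2 * a / (μ * (x + 2)) := by gcongr; norm_num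

lemma sqrt_smoothing_mul_gap_rate (hx : 0 ≤ x) (ha : 0 < a) (hμ : 0 < μ) (hD : 0 ≤ D) :
    √(2 * (2 * a / (μ * (x + 1))) * (27 * μ * D ^ 2 / (4 * a * (x + 3) ^ 2)))
      = 3 * √3 / (x + 3) * (D / √(x + 1)) := by
  rw [Real.sqrt_eq_iff_mul_self_eq (by positivity) (by positivity), ← pow_two, mul_pow, div_pow,
    div_pow, mul_pow, Real.sq_sqrt zero_le_three, Real.sq_sqrt (by positivity)]
  field_simp
  ring

end Rates

/-- The data of the linearly constrained problem `min g u + h v` subject to `A u + B v = c`. An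
extended-real-valued convex function is encoded by its effective domain together with its finite
values there. -/
structure SplitProblem (E F H : Type*) [NormedAddCommGroup E] [NormedSpace ℝ E] [AddCommGroup F]
    [Module ℝ F] [NormedAddCommGroup H] [InnerProductSpace ℝ H] where
  g : E → ℝ
  domg : Set E
  h : F → ℝ
  domh : Set F
  A : E →L[ℝ] H
  B : F →ₗ[ℝ] H
  c : H

/-- A state of the accelerated scheme: the averaged primal point `x̄ = (ū, v̄)`, the dual iterate
`λ̄`, and the center `λ*`, the maximizer of the smoothed Lagrangian at `x̄`. -/
structure SAMAState (E F H : Type*) where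
  primal : E × F
  dual : H
  center : H

namespace SplitProblem

variable {E F H : Type*} [NormedAddCommGroup E] [NormedSpace ℝ E] [AddCommGroup F] [Module ℝ F]
  [NormedAddCommGroup H] [InnerProductSpace ℝ H] (P : SplitProblem E F H)

/-- The effective domain of the objective. -/
def dom : Set (E × F) := P.domg ×ˢ P.domh

/-- The objective `f (u, v) = g u + h v`. -/
def obj (x : E × F) : ℝ := P.g x.1 + P.h x.2

/-- The constraint residual `A u + B v - c`. -/
def residual (x : E × F) : H := P.A x.1 + P.B x.2 - P.c

/-- The Lagrangian, with the sign convention under which the paper's dual function satisfies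
`d lam = -inf_x (lagrangian x lam)`. -/
def lagrangian (x : E × F) (lam : H) : ℝ := P.obj x - ⟪lam, P.residual x⟫

/-- The pair `(x, lam)` satisfies the KKT conditions: feasibility, `Aᵀ lam ∈ ∂g u` and
`Bᵀ lam ∈ ∂h v`, with the transposes moved across the inner product. -/
structure IsKKT (x : E × F) (lam : H) : Prop where
  mem_dom : x ∈ P.dom
  feasible : P.A x.1 + P.B x.2 = P.c
  subgradient_fst : ∀ u ∈ P.domg, P.g x.1 + ⟪lam, P.A (u - x.1)⟫ ≤ P.g u
  subgradient_snd : ∀ v ∈ P.domh, P.h x.2 + ⟪lam, P.B (v - x.2)⟫ ≤ P.h v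

/-- One step of the alternating minimization algorithm with step size `η` from the multiplier `lam`,
producing the primal point `x` and the multiplier `lam'`. Only the second block is minimized with
the augmented term. -/
structure IsAMAStep (η : ℝ) (lam : H) (x : E × F) (lam' : H) : Prop where
  fst_mem : x.1 ∈ P.domg
  fst_min : IsMinOn (fun u => P.g u - ⟪lam, P.A u⟫) P.domg x.1
  snd_mem : x.2 ∈ P.domh
  snd_min : IsMinOn (fun v => P.h v - ⟪lam, P.B v⟫ + η / 2 * ‖P.A x.1 + P.B v - P.c‖ ^ 2)
    P.domh x.2
  dual_eq : lam' = lam - η • P.residual x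

/-- One step of the accelerated scheme from the state `s` to `s'`, through the extrapolated
multiplier `lam` and the candidate `x`, with averaging weight `τ`, step size `η`, and smoothing
parameters `β` and `β'` before and after the step. -/
structure IsSAMAStep (τ η β β' : ℝ) (s : SAMAState E F H) (lam : H) (x : E × F)
    (s' : SAMAState E F H) : Prop where
  extrapolation : lam = (1 - τ) • s.dual + τ • s.center
  amaStep : P.IsAMAStep η lam x s'.dual
  center_eq : s'.center
    = β'⁻¹ • (((1 - τ) * β) • s.center + (τ * η⁻¹) • (s'.dual - lam))
  fst_eq : s'.primal.1 = (1 - τ) • s.primal.1 + τ • x.1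
  snd_eq : s'.primal.2 = (1 - τ) • s.primal.2 + τ • x.2

/-- A run of the strongly convex scheme from the zero multiplier, with the parameters
`τ k = 3 / (k + 4)`, `η k = μ τ k / ‖A‖²` and `β k = 2 ‖A‖² / (μ (k + 1))`. The states are indexed
from `1`; the values at `0` are irrelevant. -/
structure IsSAMARun (μ : ℝ) (s : ℕ → SAMAState E F H) (lam : ℕ → H) (x : ℕ → E × F) : Prop where
  init : P.IsAMAStep (μ * (3 / 4) / ‖P.A‖ ^ 2) 0 (s 1).primal (s 1).dual
  init_center : (s 1).center
    = (2 * ‖P.A‖ ^ 2 / (μ * 2))⁻¹ • (P.c - P.A (s 1).primal.1 - P.B (s 1).primal.2)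
  step : ∀ k : ℕ, 1 ≤ k → P.IsSAMAStep (3 / ((k : ℝ) + 4)) (μ * (3 / ((k : ℝ) + 4)) / ‖P.A‖ ^ 2)
    (2 * ‖P.A‖ ^ 2 / (μ * ((k : ℝ) + 1))) (2 * ‖P.A‖ ^ 2 / (μ * ((k : ℝ) + 2)))
    (s k) (lam k) (x (k + 1)) (s (k + 1))

/-- The smoothed duality gap of the state `s` tested at the point `x`. Its supremum over `P.dom` is
`f x̄ + d λ̄ + ‖r x̄‖² / (2 β)`; keeping `x` free avoids an infinite value of the dual function. -/
def smoothedGap (β : ℝ) (s : SAMAState E F H) (x : E × F) : ℝ :=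
  P.obj s.primal - P.lagrangian x s.dual + ‖P.residual s.primal‖ ^ 2 / (2 * β)

variable {P} {x y : E × F} {lam lam' : H} {s s' : SAMAState E F H} {μ τ η β β' : ℝ}

lemma convexOn_obj (hg : ConvexOn ℝ P.domg P.g) (hh : ConvexOn ℝ P.domh P.h) :
    ConvexOn ℝ P.dom P.obj :=
  have hconv : Convex ℝ P.dom := hg.1.prod hh.1
  ((hg.comp_linearMap (LinearMap.fst ℝ E F)).subset (fun _ hx => hx.1) hconv).add
    ((hh.comp_linearMap (LinearMap.snd ℝ E F)).subset (fun _ hx => hx.2) hconv)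

lemma residual_lineMap (x y : E × F) (τ : ℝ) :
    P.residual ((1 - τ) • x + τ • y) = (1 - τ) • P.residual x + τ • P.residual y := by
  simp only [residual, Prod.fst_add, Prod.snd_add, Prod.smul_fst, Prod.smul_snd, map_add, map_smul]
  module

lemma IsKKT.residual_eq_zero (hx : P.IsKKT x lam) : P.residual x = 0 :=
  sub_eq_zero.2 hx.feasible

lemma IsKKT.obj_le_lagrangian (hx : P.IsKKT x lam) (hy : y ∈ P.dom) :
    P.obj x ≤ P.lagrangian y lam := by
  have hfst := hx.subgradient_fst _ hy.1
  have hsnd := hx.subgradient_snd _ hy.2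
  have hsplit : P.residual y = P.A (y.1 - x.1) + P.B (y.2 - x.2) := by
    rw [residual, ← hx.feasible, map_sub, map_sub]; abel
  rw [lagrangian, obj, obj, hsplit, inner_add_right]
  linarith

lemma IsAMAStep.mem_dom (hstep : P.IsAMAStep η lam x lam') : x ∈ P.dom :=
  ⟨hstep.fst_mem, hstep.snd_mem⟩

/-- A forward step on the `‖A‖² / μ`-smooth part of the dual, then a backward step on the rest. -/
lemma IsAMAStep.lagrangian_add_le (hstep : P.IsAMAStep η lam x lam') (hμ : 0 < μ)
    (hg : StrongConvexOn P.domg μ P.g) (hh : ConvexOn ℝ P.domh P.h) (hy : y ∈ P.dom) :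
    P.lagrangian x lam + η * (1 - ‖P.A‖ ^ 2 / μ * η / 2) * ‖P.residual x‖ ^ 2
      ≤ P.lagrangian y lam' := by
  have hgrowth := add_modulus_le_of_isMinOn_sub_linear hg (innerₛₗ ℝ lam ∘ₗ P.A.toLinearMap)
    hstep.fst_mem hstep.fst_min hy.1
  have hprox := subgradient_of_isMinOn_add_sq_norm hh P.B _ _ _ _ hstep.snd_mem hstep.snd_min hy.2
  have hyoung := inner_map_le_add_sq_norm P.A hμ (η • P.residual x) (x.1 - y.1)
  have hres : P.residual y = P.residual x - P.A (x.1 - y.1) + (P.B y.2 - P.B x.2) := by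
    rw [residual, residual, map_sub]; abel
  rw [← residual] at hprox
  rw [norm_smul, mul_pow, Real.norm_eq_abs, sq_abs] at hyoung
  rw [← neg_sub x.1 y.1] at hgrowth
  simp only [LinearMap.comp_apply, ContinuousLinearMap.coe_coe, innerₛₗ_apply_apply,
    map_neg] at hgrowth
  simp only [real_inner_smul_left, inner_sub_left] at hyoung hprox
  simp only [lagrangian, obj, hstep.dual_eq, hres, inner_sub_left, inner_add_right, inner_sub_right,
    real_inner_smul_left, real_inner_self_eq_norm_sq] at hprox ⊢
  linarith

lemma IsAMAStep.smoothedGap_le (hstep : P.IsAMAStep η 0 s.primal s.dual) (hμ : 0 < μ)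
    (hg : StrongConvexOn P.domg μ P.g) (hh : ConvexOn ℝ P.domh P.h) (hy : y ∈ P.dom) :
    P.smoothedGap β s y
      ≤ (1 / (2 * β) - η * (1 - ‖P.A‖ ^ 2 / μ * η / 2)) * ‖P.residual s.primal‖ ^ 2 := by
  have hdescent := hstep.lagrangian_add_le hμ hg hh hy
  rw [lagrangian, inner_zero_left, sub_zero] at hdescent
  rw [smoothedGap, sub_mul, one_div_mul_eq_div]
  linarith

lemma IsSAMAStep.primal_eq (hstep : P.IsSAMAStep τ η β β' s lam x s') :
    s'.primal = (1 - τ) • s.primal + τ • x :=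
  Prod.ext hstep.fst_eq hstep.snd_eq

lemma IsSAMAStep.center_eq_neg_smul_residual (hstep : P.IsSAMAStep τ η β β' s lam x s')
    (hη : η ≠ 0) (hβ : β ≠ 0) (hs : s.center = -β⁻¹ • P.residual s.primal) :
    s'.center = -β'⁻¹ • P.residual s'.primal := by
  have hmove : s'.dual - lam = -η • P.residual x := by
    rw [hstep.amaStep.dual_eq]; module
  rw [hstep.center_eq, hmove, hs, hstep.primal_eq, residual_lineMap]
  match_scalars <;> field_simp

lemma IsSAMAStep.smoothedGap_le (hstep : P.IsSAMAStep τ η β β' s lam x s') (hμ : 0 < μ)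
    (hg : StrongConvexOn P.domg μ P.g) (hh : ConvexOn ℝ P.domh P.h) (hτ0 : 0 ≤ τ) (hτ1 : τ < 1)
    (hβ : 0 < β) (hββ' : (1 - τ) * β ≤ β') (hs : s.primal ∈ P.dom)
    (hcenter : s.center = -β⁻¹ • P.residual s.primal) (hy : y ∈ P.dom) :
    P.smoothedGap β' s' y ≤ (1 - τ) * P.smoothedGap β s x
      + (τ ^ 2 / (2 * (1 - τ) * β) - η * (1 - ‖P.A‖ ^ 2 / μ * η / 2)) * ‖P.residual x‖ ^ 2 := by
  have hdescent := hstep.amaStep.lagrangian_add_le hμ hg hh hy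
  have hconvex := (convexOn_obj (hg.convexOn fun _ => by positivity) hh).2 hs
    hstep.amaStep.mem_dom (sub_nonneg.2 hτ1.le) hτ0 (sub_add_cancel 1 τ)
  have hsquare :=
    sq_norm_add_smul_div_le hτ1 hβ hββ' (P.residual s.primal) (P.residual x)
  rw [← hstep.primal_eq, smul_eq_mul, smul_eq_mul] at hconvex
  rw [← residual_lineMap, ← hstep.primal_eq] at hsquare
  have hextra : ⟪lam, P.residual x⟫ = (1 - τ) * ⟪s.dual, P.residual x⟫
      - τ / β * ⟪P.residual s.primal, P.residual x⟫ := by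
    rw [hstep.extrapolation, hcenter]
    simp only [inner_add_left, real_inner_smul_left]
    ring
  rw [lagrangian, hextra] at hdescent
  have hlag : P.lagrangian x s.dual = P.obj x - ⟪s.dual, P.residual x⟫ := rfl
  rw [smoothedGap, smoothedGap, hlag]
  linarith

lemma IsKKT.obj_sub_le_of_smoothedGap_le {ε : ℝ} (hx : P.IsKKT x lam) (hβ : 0 ≤ β)
    (hgap : P.smoothedGap β s x ≤ ε) : P.obj s.primal - P.obj x ≤ ε := by
  have : 0 ≤ ‖P.residual s.primal‖ ^ 2 / (2 * β) := by positivity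
  rw [smoothedGap, lagrangian, hx.residual_eq_zero, inner_zero_right] at hgap
  linarith

lemma IsKKT.norm_residual_le_of_smoothedGap_le {ε : ℝ} (hx : P.IsKKT x lam) (hβ : 0 < β)
    (hs : s.primal ∈ P.dom) (hgap : P.smoothedGap β s x ≤ ε) :
    ‖P.residual s.primal‖ ≤ 2 * β * ‖lam‖ + √(2 * β * ε) := by
  have hsaddle := hx.obj_le_lagrangian hs
  have hcs := neg_le_of_abs_le (abs_real_inner_le_norm lam (P.residual s.primal))
  rw [smoothedGap, lagrangian, hx.residual_eq_zero, inner_zero_right] at hgap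
  rw [lagrangian] at hsaddle
  set ρ := ‖P.residual s.primal‖
  have hquad : ρ * (ρ - 2 * β * ‖lam‖) ≤ 2 * β * ε := by
    have hle : ρ ^ 2 / (2 * β) ≤ ‖lam‖ * ρ + ε := by linarith
    rw [div_le_iff₀ (by positivity)] at hle
    linarith
  exact le_add_sqrt_of_mul_sub_le (by positivity) hquad

section Run

variable {D : ℝ} {s : ℕ → SAMAState E F H} {lam : ℕ → H} {x : ℕ → E × F}

lemma IsSAMARun.primal_mem_dom (hrun : P.IsSAMARun μ s lam x) (hdom : Convex ℝ P.dom) {k : ℕ}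
    (hk : 1 ≤ k) : (s k).primal ∈ P.dom := by
  induction k, hk using Nat.le_induction with
  | base => exact hrun.init.mem_dom
  | succ k hk ih =>
    have hτ := three_div_add_four_lt_one_s12 (k.cast_nonneg (α := ℝ))
    rw [(hrun.step k hk).primal_eq]
    exact hdom ih (hrun.step k hk).amaStep.mem_dom (sub_nonneg.2 hτ.le) (by positivity)
      (sub_add_cancel _ _)

lemma IsSAMARun.center_eq_neg_smul_residual (hrun : P.IsSAMARun μ s lam x) (hμ : 0 < μ)
    (hA : 0 < ‖P.A‖) {k : ℕ} (hk : 1 ≤ k) :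
    (s k).center = -(2 * ‖P.A‖ ^ 2 / (μ * ((k : ℝ) + 1)))⁻¹ • P.residual (s k).primal := by
  induction k, hk using Nat.le_induction with
  | base =>
    rw [hrun.init_center, Nat.cast_one, one_add_one_eq_two, residual]
    module
  | succ k hk ih =>
    have hcenter := (hrun.step k hk).center_eq_neg_smul_residual (by positivity) (by positivity) ih
    rwa [Nat.cast_succ, add_assoc (k : ℝ), one_add_one_eq_two]

lemma IsSAMARun.smoothedGap_le (hrun : P.IsSAMARun μ s lam x) (hμ : 0 < μ) (hA : 0 < ‖P.A‖)
    (hg : StrongConvexOn P.domg μ P.g) (hh : ConvexOn ℝ P.domh P.h)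
    (hD : ∀ y ∈ P.dom, ‖P.residual y‖ ≤ D) {k : ℕ} (hk : 1 ≤ k) :
    ∀ y ∈ P.dom, P.smoothedGap (2 * ‖P.A‖ ^ 2 / (μ * ((k : ℝ) + 1))) (s k) y
      ≤ 27 * μ * D ^ 2 / (4 * ‖P.A‖ ^ 2 * ((k : ℝ) + 3) ^ 2) := by
  have hA2 : 0 < ‖P.A‖ ^ 2 := by positivity
  have hD2 : ∀ y ∈ P.dom, ‖P.residual y‖ ^ 2 ≤ D ^ 2 := fun y hy => by gcongr; exact hD y hy
  induction k, hk using Nat.le_induction with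
  | base =>
    intro y hy
    rw [Nat.cast_one, one_add_one_eq_two]
    exact (hrun.init.smoothedGap_le hμ hg hh hy).trans
      (gap_rate_one hA2 hμ (sq_nonneg _) (hD2 _ hrun.init.mem_dom))
  | succ k hk ih =>
    intro y hy
    have hstep := hrun.step k hk
    have hτ := three_div_add_four_lt_one_s12 (k.cast_nonneg (α := ℝ))
    have hdom : Convex ℝ P.dom := hg.1.prod hh.1
    have hrec := hstep.smoothedGap_le hμ hg hh (by positivity) hτ (by positivity)
      (one_sub_weight_mul_smoothing_le k.cast_nonneg hA2.le hμ) (hrun.primal_mem_dom hdom hk)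
      (hrun.center_eq_neg_smul_residual hμ hA hk) hy
    have hprev := mul_le_mul_of_nonneg_left (ih _ hstep.amaStep.mem_dom) (sub_nonneg.2 hτ.le)
    have hrate := gap_rate_succ (x := k) k.cast_nonneg hA2 hμ (sq_nonneg _)
      (hD2 _ hstep.amaStep.mem_dom)
    rw [Nat.cast_succ, add_assoc (k : ℝ), add_assoc (k : ℝ), one_add_one_eq_two,
      show (1 : ℝ) + 3 = 4 by norm_num]
    linarith

end Run

end SplitProblem

theorem stmt_12_general {E F H : Type*} [NormedAddCommGroup E] [NormedSpace ℝ E] [AddCommGroup F]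
    [Module ℝ F] [NormedAddCommGroup H] [InnerProductSpace ℝ H] (P : SplitProblem E F H)
    {μ D : ℝ} (hμ : 0 < μ) (hA : 0 < ‖P.A‖) (hg : StrongConvexOn P.domg μ P.g)
    (hh : ConvexOn ℝ P.domh P.h) {xstar : E × F} {lamstar : H} (hstar : P.IsKKT xstar lamstar)
    (hD : ∀ y ∈ P.dom, ‖P.residual y‖ ≤ D) {s : ℕ → SAMAState E F H} {lam : ℕ → H}
    {x : ℕ → E × F} (hrun : P.IsSAMARun μ s lam x) (k : ℕ) (hk : 1 ≤ k) :
    P.obj (s k).primal - P.obj xstar ≤ 27 * μ * D ^ 2 / (4 * ‖P.A‖ ^ 2 * ((k : ℝ) + 3) ^ 2) ∧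
    ‖P.residual (s k).primal‖ ≤ 4 * ‖P.A‖ ^ 2 * ‖lamstar‖ / (μ * ((k : ℝ) + 1))
      + 3 * √3 / ((k : ℝ) + 3) * (D / √((k : ℝ) + 1)) := by
  have hgap := hrun.smoothedGap_le hμ hA hg hh hD hk xstar hstar.mem_dom
  have hD0 : 0 ≤ D := (norm_nonneg _).trans (hD _ hstar.mem_dom)
  refine ⟨hstar.obj_sub_le_of_smoothedGap_le (by positivity) hgap, ?_⟩
  have hres := hstar.norm_residual_le_of_smoothedGap_le (by positivity)
    (hrun.primal_mem_dom (hg.1.prod hh.1) hk) hgap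
  rw [sqrt_smoothing_mul_gap_rate k.cast_nonneg (by positivity) hμ hD0] at hres
  convert hres using 2
  ring

theorem stmt_12 {p₁ p₂ n : ℕ}
    (g : EuclideanSpace ℝ (Fin p₁) → ℝ) (domg : Set (EuclideanSpace ℝ (Fin p₁)))
    (h : EuclideanSpace ℝ (Fin p₂) → ℝ) (domh : Set (EuclideanSpace ℝ (Fin p₂)))
    (A : EuclideanSpace ℝ (Fin p₁) →L[ℝ] EuclideanSpace ℝ (Fin n))
    (B : EuclideanSpace ℝ (Fin p₂) →L[ℝ] EuclideanSpace ℝ (Fin n))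
    (c : EuclideanSpace ℝ (Fin n))
    (hgconv : ConvexOn ℝ domg g) (hglsc : LowerSemicontinuousOn g domg)
    (hgne : domg.Nonempty)
    (hhconv : ConvexOn ℝ domh h) (hhlsc : LowerSemicontinuousOn h domh)
    (hhne : domh.Nonempty)
    (gstar : EuclideanSpace ℝ (Fin p₁) → ℝ) (hstar : EuclideanSpace ℝ (Fin p₂) → ℝ)
    (hgstar : ∀ z, IsLUB ((fun u => ⟪z, u⟫ - g u) '' domg) (gstar z))
    (hhstar : ∀ z, IsLUB ((fun v => ⟪z, v⟫ - h v) '' domh) (hstar z))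
    (d : EuclideanSpace ℝ (Fin n) → ℝ)
    (hd : ∀ lam, d lam = gstar ((ContinuousLinearMap.adjoint A) lam) + hstar ((ContinuousLinearMap.adjoint B) lam) - ⟪c, lam⟫)
    (ustar : EuclideanSpace ℝ (Fin p₁)) (vstar : EuclideanSpace ℝ (Fin p₂)) (lamstar : EuclideanSpace ℝ (Fin n))
    (hustar : ustar ∈ domg) (hvstar : vstar ∈ domh)
    (hkkt0 : A ustar + B vstar = c)
    (hkktg : ∀ u ∈ domg, g ustar + ⟪(ContinuousLinearMap.adjoint A) lamstar, u - ustar⟫ ≤ g u)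
    (hkkth : ∀ v ∈ domh, h vstar + ⟪(ContinuousLinearMap.adjoint B) lamstar, v - vstar⟫ ≤ h v)
    (hA : 0 < ‖A‖)
    (μg : ℝ) (hμg : 0 < μg) (hgsc : StrongConvexOn domg μg g)
    (fstar : ℝ)
    (hfs : fstar = g ustar + h vstar)
    (hfd : fstar = -(d lamstar))
    (Df : ℝ)
    (hDf : IsLUB {r : ℝ | ∃ u ∈ domg, ∃ v ∈ domh, r = ‖A u + B v - c‖} Df)
    (ub : ℕ → EuclideanSpace ℝ (Fin p₁)) (vb : ℕ → EuclideanSpace ℝ (Fin p₂)) (lb ls lh : ℕ → EuclideanSpace ℝ (Fin n))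
    (uh : ℕ → EuclideanSpace ℝ (Fin p₁)) (vh : ℕ → EuclideanSpace ℝ (Fin p₂))
    (hub1 : ub 1 ∈ domg ∧ ∀ u ∈ domg,
      g (ub 1) - ⟪(ContinuousLinearMap.adjoint A) 0, ub 1⟫ ≤ g u - ⟪(ContinuousLinearMap.adjoint A) 0, u⟫)
    (hvb1 : vb 1 ∈ domh ∧ ∀ v ∈ domh,
      h (vb 1) - ⟪(ContinuousLinearMap.adjoint B) 0, vb 1⟫ + (μg*(3/4)/‖A‖^2)/2 * ‖A (ub 1) + B (vb 1) - c‖^2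
        ≤ h v - ⟪(ContinuousLinearMap.adjoint B) 0, v⟫ + (μg*(3/4)/‖A‖^2)/2 * ‖A (ub 1) + B v - c‖^2)
    (hlb1 : lb 1 = (0 : EuclideanSpace ℝ (Fin n)) - (μg*(3/4)/‖A‖^2) • (A (ub 1) + B (vb 1) - c))
    (hls1 : ls 1 = (2*‖A‖^2/(μg*2))⁻¹ • (c - A (ub 1) - B (vb 1)))
    (hlh : ∀ k : ℕ, 1 ≤ k →
      lh k = (1 - 3/((k:ℝ)+4)) • lb k + (3/((k:ℝ)+4)) • ls k)
    (huh : ∀ k : ℕ, 1 ≤ k → uh (k+1) ∈ domg ∧ ∀ u ∈ domg,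
      g (uh (k+1)) - ⟪(ContinuousLinearMap.adjoint A) (lh k), uh (k+1)⟫ ≤ g u - ⟪(ContinuousLinearMap.adjoint A) (lh k), u⟫)
    (hvh : ∀ k : ℕ, 1 ≤ k → vh (k+1) ∈ domh ∧ ∀ v ∈ domh,
      h (vh (k+1)) - ⟪(ContinuousLinearMap.adjoint B) (lh k), vh (k+1)⟫
          + (μg*(3/((k:ℝ)+4))/‖A‖^2)/2 * ‖A (uh (k+1)) + B (vh (k+1)) - c‖^2
        ≤ h v - ⟪(ContinuousLinearMap.adjoint B) (lh k), v⟫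
          + (μg*(3/((k:ℝ)+4))/‖A‖^2)/2 * ‖A (uh (k+1)) + B v - c‖^2)
    (hlbk : ∀ k : ℕ, 1 ≤ k →
      lb (k+1) = lh k - (μg*(3/((k:ℝ)+4))/‖A‖^2) • (A (uh (k+1)) + B (vh (k+1)) - c))
    (hlsk : ∀ k : ℕ, 1 ≤ k →
      ls (k+1) = (2*‖A‖^2/(μg*((k:ℝ)+2)))⁻¹ •
        (((1 - 3/((k:ℝ)+4)) * (2*‖A‖^2/(μg*((k:ℝ)+1)))) • ls k
          + ((3/((k:ℝ)+4)) * (μg*(3/((k:ℝ)+4))/‖A‖^2)⁻¹) • (lb (k+1) - lh k)))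
    (hubk : ∀ k : ℕ, 1 ≤ k →
      ub (k+1) = (1 - 3/((k:ℝ)+4)) • ub k + (3/((k:ℝ)+4)) • uh (k+1))
    (hvbk : ∀ k : ℕ, 1 ≤ k →
      vb (k+1) = (1 - 3/((k:ℝ)+4)) • vb k + (3/((k:ℝ)+4)) • vh (k+1)) :
    ∀ k : ℕ, 1 ≤ k →
      g (ub k) + h (vb k) - fstar ≤ 27*μg*Df^2/(4*‖A‖^2*((k:ℝ)+3)^2) ∧
      ‖A (ub k) + B (vb k) - c‖
        ≤ 4*‖A‖^2*‖lamstar‖/(μg*((k:ℝ)+1))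
          + (3*Real.sqrt 3/((k:ℝ)+3)) * (Df/Real.sqrt ((k:ℝ)+1)) := by
  simp only [ContinuousLinearMap.adjoint_inner_left] at hkktg hkkth hub1 hvb1 huh hvh
  exact hfs ▸ stmt_12_general ⟨g, domg, h, domh, A, B, c⟩ hμg hA hgsc hhconv
    (xstar := (ustar, vstar)) ⟨⟨hustar, hvstar⟩, hkkt0, hkktg, hkkth⟩
    (fun y hy => hDf.1 ⟨y.1, hy.1, y.2, hy.2, rfl⟩)
    (s := fun k => ⟨(ub k, vb k), lb k, ls k⟩) (lam := lh) (x := fun k => (uh k, vh k))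
    ⟨⟨hub1.1, hub1.2, hvb1.1, hvb1.2, hlb1⟩, hls1, fun k hk =>
      ⟨hlh k hk, ⟨(huh k hk).1, (huh k hk).2, (hvh k hk).1, (hvh k hk).2, hlbk k hk⟩,
        hlsk k hk, hubk k hk, hvbk k hk⟩⟩
end
end
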